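/- Let M be a triangulated Möbius strip with no interior vertices. Then M has at least one interior edge, and moreover by repeatedly cutting along separating interior edges one obtains a Möbius strip M' (a subcomplex of M, still without interior vertices) in which every interior edge is non-separating. -/

import Mathlib

open Finset

/-- An abstract simplicial complex on vertex type `V`, given by its finite set of
(nonempty) faces, closed under taking nonempty subsets. -/
structure SComplex (V : Type) [DecidableEq V] where
  faces : Finset (Finset V)
  nonempty_of_mem : ∀ σ ∈ faces, σ.Nonempty
  down_closed : ∀ σ ∈ faces, ∀ τ ⊆ σ, τ.Nonempty → τ ∈ faces

namespace SComplex

variable {V : Type} [DecidableEq V]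

/-- the number `f_k` of `k`-dimensional faces -/
def fNum (K : SComplex V) (k : ℕ) : ℕ := (K.faces.filter fun σ => σ.card = k + 1).card

/-- `g₂` of a `d`-dimensional complex: `f₁ - (d+1) f₀ + C(d+2,2)` -/
def g2 (K : SComplex V) (d : ℕ) : ℤ :=
  (K.fNum 1 : ℤ) - (d + 1) * (K.fNum 0 : ℤ) + (Nat.choose (d + 2) 2 : ℤ)

/-- the vertex set of a complex -/
def vertices (K : SComplex V) : Finset V := K.faces.sup id

/-- the link of a face `σ` -/
def link (K : SComplex V) (σ : Finset V) : SComplex V where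
  faces := K.faces.filter fun τ => σ ∩ τ = ∅ ∧ σ ∪ τ ∈ K.faces
  nonempty_of_mem τ hτ := K.nonempty_of_mem τ (mem_filter.mp hτ).1
  down_closed := by
    intro τ hτ ρ hρ hne
    rw [mem_filter] at hτ ⊢
    obtain ⟨h1, h2, h3⟩ := hτ
    refine ⟨K.down_closed τ h1 ρ hρ hne, subset_empty.mp ?_, 
      K.down_closed _ h3 _ (union_subset_union Subset.rfl hρ) ?_⟩
    · exact h2 ▸ inter_subset_inter Subset.rfl hρ
    · obtain ⟨w, hw⟩ := hne
      exact ⟨w, mem_union_right _ hw⟩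

/-- the (closed) star of a vertex `t` -/
def star (K : SComplex V) (t : V) : SComplex V where
  faces := K.faces.filter fun τ => insert t τ ∈ K.faces
  nonempty_of_mem τ hτ := K.nonempty_of_mem τ (mem_filter.mp hτ).1
  down_closed := by
    intro τ hτ ρ hρ hne
    rw [mem_filter] at hτ ⊢
    exact ⟨K.down_closed τ hτ.1 ρ hρ hne,
      K.down_closed _ hτ.2 _ (insert_subset_insert _ hρ) (insert_nonempty _ _)⟩

/-- connectivity of a complex (through edges) -/
def Connected (K : SComplex V) : Prop :=
  ∀ u ∈ K.vertices, ∀ w ∈ K.vertices,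
    Relation.ReflTransGen (fun a b => ({a, b} : Finset V) ∈ K.faces) u w

/-- purity: every face is contained in a `d`-dimensional face -/
def Pure (K : SComplex V) (d : ℕ) : Prop :=
  ∀ σ ∈ K.faces, ∃ τ ∈ K.faces, σ ⊆ τ ∧ τ.card = d + 1

/-- strong connectivity through facets sharing `(d-1)`-faces -/
def StronglyConnected (K : SComplex V) (d : ℕ) : Prop :=
  ∀ σ ∈ K.faces, ∀ τ ∈ K.faces, σ.card = d + 1 → τ.card = d + 1 →
    Relation.ReflTransGen
      (fun a b => a ∈ K.faces ∧ b ∈ K.faces ∧ a.card = d + 1 ∧ b.card = d + 1 ∧ (a ∩ b).card = d)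
      σ τ

/-- `K` is a `d`-dimensional pseudomanifold -/
def IsPseudomanifold (K : SComplex V) (d : ℕ) : Prop :=
  K.Pure d ∧
  (∀ σ ∈ K.faces, σ.card = d →
    (K.faces.filter fun τ => σ ⊆ τ ∧ τ.card = d + 1).card = 2) ∧
  K.StronglyConnected d

/-- `K` is a `d`-dimensional normal pseudomanifold: a pseudomanifold all of whose
faces of codimension at least two have connected links -/
def IsNormal (K : SComplex V) (d : ℕ) : Prop :=
  K.IsPseudomanifold d ∧ ∀ σ ∈ K.faces, σ.card + 1 ≤ d → (K.link σ).Connected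

/-- the geometric realization of `K`, inside `V → ℝ` -/
def realization (K : SComplex V) [Fintype V] : Set (V → ℝ) :=
  {f | ∃ σ ∈ K.faces, (∀ v, v ∉ σ → f v = 0) ∧ (∀ v, 0 ≤ f v) ∧ (∑ v, f v) = 1}

end SComplex

/-- the standard 2-sphere -/
noncomputable def Sphere2 : Set (EuclideanSpace ℝ (Fin 3)) := Metric.sphere 0 1

/-- the real projective plane, as the quotient of the 2-sphere by the antipodal map -/
def RealProjPlane : Type :=
  Quot fun a b : Sphere2 => (a : EuclideanSpace ℝ (Fin 3)) = -(b : EuclideanSpace ℝ (Fin 3))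

noncomputable instance : TopologicalSpace RealProjPlane := by unfold RealProjPlane; infer_instance

noncomputable def UnitSquare : Set (ℝ × ℝ) := Set.Icc 0 1 ×ˢ Set.Icc 0 1

/-- the Möbius band, as a quotient of the unit square -/
def MobiusBand : Type :=
  Quot fun a b : UnitSquare =>
    (a : ℝ × ℝ).1 = 0 ∧ (b : ℝ × ℝ).1 = 1 ∧ (b : ℝ × ℝ).2 = 1 - (a : ℝ × ℝ).2

noncomputable instance : TopologicalSpace MobiusBand := by unfold MobiusBand; infer_instance

noncomputable def ClosedDisc : Set (ℝ × ℝ) := Metric.closedBall 0 1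

namespace SComplex

variable {V : Type} [DecidableEq V] [Fintype V]

/-- the carrier of `K` is a 2-sphere -/
def IsSphere2 (K : SComplex V) : Prop := Nonempty (K.realization ≃ₜ Sphere2)

/-- the carrier of `K` is a real projective plane -/
def IsRP2 (K : SComplex V) : Prop := Nonempty (K.realization ≃ₜ RealProjPlane)

/-- `K` is a triangulated Möbius strip -/
def IsMobius (K : SComplex V) : Prop := Nonempty (K.realization ≃ₜ MobiusBand)

/-- `K` is a triangulated disc -/
def IsDisc (K : SComplex V) : Prop := Nonempty (K.realization ≃ₜ ClosedDisc)

end SComplex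

namespace SComplex

variable {V : Type} [DecidableEq V]

/-- `K` is the boundary complex of a `(d+1)`-simplex: all proper nonempty subsets
of a set of `d+2` vertices. -/
def IsBoundarySimplex (K : SComplex V) (d : ℕ) : Prop :=
  ∃ W : Finset V, W.card = d + 2 ∧ K.faces = (W.powerset.erase W).erase ∅

/-- `Δ'` is obtained from the `d`-dimensional complex `Δ` by a single facet
subdivision: remove a facet `σ`, add a new vertex `w`, and add all faces
`w ⋆ τ` for proper faces `τ` of `σ`. -/
def FacetSubdivision (Δ Δ' : SComplex V) (d : ℕ) : Prop :=
  ∃ σ ∈ Δ.faces, ∃ w : V, σ.card = d + 1 ∧ (∀ τ ∈ Δ.faces, w ∉ τ) ∧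
    Δ'.faces = (Δ.faces.erase σ) ∪ (σ.powerset.erase σ).image (insert w)

/-- a stacked `d`-sphere: obtained from the boundary complex of a `(d+1)`-simplex
by a finite sequence of facet subdivisions. -/
def IsStackedSphere (K : SComplex V) (d : ℕ) : Prop :=
  ∃ K₀ : SComplex V, K₀.IsBoundarySimplex d ∧
    Relation.ReflTransGen (fun A B => FacetSubdivision A B d) K₀ K

end SComplex

namespace SComplex

variable {V : Type} [DecidableEq V]

/-- an interior edge of a 2-complex: an edge contained in exactly two triangles -/
def InteriorEdge (M : SComplex V) (e : Finset V) : Prop :=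
  e ∈ M.faces ∧ e.card = 2 ∧ (M.faces.filter fun τ => τ.card = 3 ∧ e ⊆ τ).card = 2

/-- every vertex of `M` lies on the boundary, i.e. on an edge contained in exactly
one triangle -/
def NoInteriorVertices (M : SComplex V) : Prop :=
  ∀ v ∈ M.vertices, ∃ e ∈ M.faces, v ∈ e ∧ e.card = 2 ∧
    (M.faces.filter fun τ => τ.card = 3 ∧ e ⊆ τ).card = 1

/-- `M₁, M₂` are the two pieces obtained by cutting `M` along the separating
interior edge `e`: two subcomplexes meeting exactly along `e`, whose union is `M`,
each containing a triangle -/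
def SeparationAlong (M M₁ M₂ : SComplex V) (e : Finset V) : Prop :=
  M₁.faces ∪ M₂.faces = M.faces ∧
  M₁.faces ∩ M₂.faces = e.powerset.filter (· ≠ ∅) ∧
  (∃ τ ∈ M₁.faces, τ.card = 3) ∧ (∃ τ ∈ M₂.faces, τ.card = 3)

/-- the interior edge `e` separates `M` into two pieces -/
def Separates (M : SComplex V) (e : Finset V) : Prop :=
  ∃ M₁ M₂ : SComplex V, M.SeparationAlong M₁ M₂ e

end SComplex

/-!
The Möbius band `X` enters only through continuous logarithms of nonvanishing complex functions:
not every such function on `X` has one, and any two are multiplicatively dependent modulo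
exponentials, so `H¹(X; ℤ)` has rank one; locally, logarithms tell the dimension and the number of
branches at a point. Hence a complex `M` with carrier `X` and no interior vertices is a surface, and
the star of every vertex is a path of triangles. The dual graph of `M` is connected; if it had no
edge, `M` would be a single triangle, where all logarithms exist, so `M` has an interior edge.

Crossing a dual edge that lies on a cycle defines a nonvanishing function without logarithm. If for
a separating edge both pieces contained a cycle, two multiplicatively independent functions would
result; so one piece has an acyclic dual graph and hence contains a triangle with a single neighbour
in the whole dual graph. That triangle is an ear of `M`: removing it changes neither the
homeomorphism type nor the absence of interior vertices, and the theorem follows by induction on the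
number of faces.
-/

open Complex Topology Filter

section Logarithms

variable {X Y : Type*} [TopologicalSpace X] [TopologicalSpace Y] {S T : Set X} {f : X → Y}
  {g h L L' : X → ℂ}

/-- `L` is a continuous logarithm of `g` on the set `S`; the values outside `S` are irrelevant. -/
def IsLogOn (L g : X → ℂ) (S : Set X) : Prop :=
  ContinuousOn L S ∧ ∀ x ∈ S, exp (L x) = g x

/-- Every nonvanishing continuous function on `S` has a continuous logarithm; for the spaces
considered here this says `H¹(S; ℤ) = 0`. -/
def HasLogs (S : Set X) : Prop :=
  ∀ g : X → ℂ, ContinuousOn g S → (∀ x ∈ S, g x ≠ 0) → ∃ L, IsLogOn L g S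

/-- Any two nonvanishing continuous functions on `S` are multiplicatively dependent modulo
exponentials; for the spaces considered here this says that `H¹(S; ℤ)` has rank at most one. -/
def LogRankLeOne (S : Set X) : Prop :=
  ∀ g h : X → ℂ, ContinuousOn g S → (∀ x ∈ S, g x ≠ 0) → ContinuousOn h S → (∀ x ∈ S, h x ≠ 0) →
    ∃ m n : ℤ, (m ≠ 0 ∨ n ≠ 0) ∧ ∃ L, IsLogOn L (fun x ↦ g x ^ m * h x ^ n) S

theorem IsLogOn.mono (hL : IsLogOn L g S) (hTS : T ⊆ S) : IsLogOn L g T :=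
  ⟨hL.1.mono hTS, fun x hx ↦ hL.2 x (hTS hx)⟩

theorem IsLogOn.comp {g L : Y → ℂ} {T : Set Y} (hL : IsLogOn L g T) (hf : ContinuousOn f S)
    (hfST : Set.MapsTo f S T) : IsLogOn (L ∘ f) (g ∘ f) S :=
  ⟨hL.1.comp hf hfST, fun _ hx ↦ hL.2 _ (hfST hx)⟩

theorem IsLogOn.ne_zero (hL : IsLogOn L g S) {x : X} (hx : x ∈ S) : g x ≠ 0 :=
  hL.2 x hx ▸ exp_ne_zero _

theorem IsLogOn.zpow (hL : IsLogOn L g S) (m : ℤ) :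
    IsLogOn (fun x ↦ m * L x) (fun x ↦ g x ^ m) S :=
  ⟨continuousOn_const.mul hL.1, fun x hx ↦ by rw [exp_int_mul, hL.2 x hx]⟩

theorem IsLogOn.mul (hL : IsLogOn L g S) (hL' : IsLogOn L' h S) :
    IsLogOn (fun x ↦ L x + L' x) (fun x ↦ g x * h x) S :=
  ⟨hL.1.add hL'.1, fun x hx ↦ by rw [exp_add, hL.2 x hx, hL'.2 x hx]⟩

theorem IsLogOn.exists_sub_eq (hL : IsLogOn L g S) (hL' : IsLogOn L' g S)
    (hS : IsPreconnected S) : ∃ k : ℤ, ∀ x ∈ S, L x - L' x = k * (2 * Real.pi * I) := by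
  have hperiod : ∀ x ∈ S, ∃ k : ℤ, L x - L' x = k * (2 * Real.pi * I) := fun x hx ↦ by
    rw [← exp_eq_one_iff, exp_sub, hL.2 x hx, hL'.2 x hx, div_self (hL.ne_zero hx)]
  rcases S.eq_empty_or_nonempty with rfl | ⟨x₀, hx₀⟩
  · exact ⟨0, by simp⟩
  obtain ⟨k, hk⟩ := hperiod x₀ hx₀
  refine ⟨k, fun x hx ↦ ?_⟩
  have hcont : ContinuousOn (fun x ↦ ((L x - L' x) / (2 * Real.pi * I)).re) S :=
    continuous_re.comp_continuousOn ((hL.1.sub hL'.1).div_const _)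
  have hconst := hS.constant_of_mapsTo Int.isClosedEmbedding_coe_real.isDiscrete_range hcont
    (fun y hy ↦ by
      obtain ⟨l, hl⟩ := hperiod y hy
      exact ⟨l, by simp [hl]⟩) hx hx₀
  obtain ⟨l, hl⟩ := hperiod x hx
  have hlk : l = k := by simpa [hl, hk, two_pi_I_ne_zero] using hconst
  rw [hl, hlk]

theorem IsLogOn.exists_isLogOn_union (hS : IsOpen S) (hT : IsOpen T) (hL : IsLogOn L g S)
    (hL' : IsLogOn L' g T) {k : ℤ} (hk : ∀ x ∈ S ∩ T, L x - L' x = k * (2 * Real.pi * I)) :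
    ∃ L'', IsLogOn L'' g (S ∪ T) := by
  classical
  let L'' : X → ℂ := S.piecewise L fun x ↦ L' x + k * (2 * Real.pi * I)
  have hS_eq : Set.EqOn L'' L S := Set.piecewise_eqOn _ _ _
  have hT_eq : Set.EqOn L'' (fun x ↦ L' x + k * (2 * Real.pi * I)) T := fun x hx ↦ by
    by_cases hxS : x ∈ S
    · rw [hS_eq hxS, ← hk x ⟨hxS, hx⟩]; ring
    · exact Set.piecewise_eq_of_notMem _ _ _ hxS
  refine ⟨L'', (hL.1.congr hS_eq).union_of_isOpen
    ((hL'.1.add continuousOn_const).congr hT_eq) hS hT, ?_⟩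
  rintro x (hx | hx)
  · rw [hS_eq hx, hL.2 x hx]
  · rw [hT_eq hx, exp_add, exp_int_mul_two_pi_mul_I, mul_one, hL'.2 x hx]

theorem HasLogs.union (hS : IsOpen S) (hT : IsOpen T) (hlS : HasLogs S) (hlT : HasLogs T)
    (hST : IsPreconnected (S ∩ T)) : HasLogs (S ∪ T) := by
  intro g hg hg0
  obtain ⟨L, hL⟩ := hlS g (hg.mono Set.subset_union_left) fun x hx ↦ hg0 x (.inl hx)
  obtain ⟨L', hL'⟩ := hlT g (hg.mono Set.subset_union_right) fun x hx ↦ hg0 x (.inr hx)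
  obtain ⟨k, hk⟩ := (hL.mono Set.inter_subset_left).exists_sub_eq
    (hL'.mono Set.inter_subset_right) hST
  exact hL.exists_isLogOn_union hS hT hL' hk

theorem HasLogs.logRankLeOne (hS : HasLogs S) : LogRankLeOne S := by
  intro g h hg hg0 _ _
  obtain ⟨L, hL⟩ := hS g hg hg0
  exact ⟨1, 0, .inl one_ne_zero, L, by simpa using hL⟩

/-- On each of the two components of `S ∩ T` the logarithms chosen on `S` and on `T` differ by a
constant, so the obstruction to a global logarithm of `g` is a single integer `k₂ - k₁`. -/
theorem HasLogs.logRankLeOne_union {C₁ C₂ : Set X} (hS : IsOpen S) (hT : IsOpen T)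
    (hlS : HasLogs S) (hlT : HasLogs T) (hC₁ : IsPreconnected C₁) (hC₂ : IsPreconnected C₂)
    (hC : S ∩ T = C₁ ∪ C₂) : LogRankLeOne (S ∪ T) := by
  have logs_on_union : ∀ g : X → ℂ, ContinuousOn g (S ∪ T) → (∀ x ∈ S ∪ T, g x ≠ 0) →
      ∃ L L' : X → ℂ, ∃ k₁ k₂ : ℤ, IsLogOn L g S ∧ IsLogOn L' g T ∧
        (∀ x ∈ C₁, L x - L' x = k₁ * (2 * Real.pi * I)) ∧
        ∀ x ∈ C₂, L x - L' x = k₂ * (2 * Real.pi * I) := by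
    intro g hg hg0
    obtain ⟨L, hL⟩ := hlS g (hg.mono Set.subset_union_left) fun x hx ↦ hg0 x (.inl hx)
    obtain ⟨L', hL'⟩ := hlT g (hg.mono Set.subset_union_right) fun x hx ↦ hg0 x (.inr hx)
    obtain ⟨hC₁S, hC₂S⟩ := Set.union_subset_iff.mp (hC.symm.trans_subset Set.inter_subset_left)
    obtain ⟨hC₁T, hC₂T⟩ := Set.union_subset_iff.mp (hC.symm.trans_subset Set.inter_subset_right)
    obtain ⟨k₁, hk₁⟩ := (hL.mono hC₁S).exists_sub_eq (hL'.mono hC₁T) hC₁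
    obtain ⟨k₂, hk₂⟩ := (hL.mono hC₂S).exists_sub_eq (hL'.mono hC₂T) hC₂
    exact ⟨L, L', k₁, k₂, hL, hL', hk₁, hk₂⟩
  intro g h hg hg0 hh hh0
  obtain ⟨L, L', k₁, k₂, hL, hL', hk₁, hk₂⟩ := logs_on_union g hg hg0
  obtain ⟨N, N', l₁, l₂, hN, hN', hl₁, hl₂⟩ := logs_on_union h hh hh0
  obtain ⟨m, n, hmn, heq⟩ : ∃ m n : ℤ, (m ≠ 0 ∨ n ≠ 0) ∧ m * k₁ + n * l₁ = m * k₂ + n * l₂ := by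
    by_cases hk : k₁ = k₂
    · exact ⟨1, 0, .inl one_ne_zero, by simp [hk]⟩
    · exact ⟨l₁ - l₂, k₂ - k₁, .inr (sub_ne_zero.mpr (Ne.symm hk)), by ring⟩
  refine ⟨m, n, hmn, ((hL.zpow m).mul (hN.zpow n)).exists_isLogOn_union hS hT
    ((hL'.zpow m).mul (hN'.zpow n)) (k := m * k₁ + n * l₁) fun x hx ↦ ?_⟩
  rw [hC] at hx
  rcases hx with hx | hx
  · push_cast
    linear_combination (m : ℂ) * hk₁ x hx + (n : ℂ) * hl₁ x hx
  · rw [heq]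
    push_cast
    linear_combination (m : ℂ) * hk₂ x hx + (n : ℂ) * hl₂ x hx

theorem continuousOn_image_iff_of_isEmbedding {Z : Type*} [TopologicalSpace Z] {g : Y → Z}
    (hf : IsEmbedding f) : ContinuousOn g (f '' S) ↔ ContinuousOn (g ∘ f) S := by
  simp only [ContinuousOn, Set.forall_mem_image, ContinuousWithinAt, ← hf.map_nhdsWithin_eq,
    Filter.tendsto_map'_iff, Function.comp_apply]

theorem isLogOn_image_iff {g L : Y → ℂ} (hf : IsEmbedding f) :
    IsLogOn L g (f '' S) ↔ IsLogOn (L ∘ f) (g ∘ f) S := by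
  simp only [IsLogOn, continuousOn_image_iff_of_isEmbedding hf, Set.forall_mem_image,
    Function.comp_apply]

theorem hasLogs_image_iff (hf : IsEmbedding f) : HasLogs (f '' S) ↔ HasLogs S := by
  have hsurj : Function.Surjective fun g : Y → ℂ ↦ g ∘ f := hf.injective.surjective_comp_right
  simp only [HasLogs, hsurj.forall, hsurj.exists, isLogOn_image_iff hf,
    continuousOn_image_iff_of_isEmbedding hf, Set.forall_mem_image, Function.comp_apply]

theorem logRankLeOne_image_iff (hf : IsEmbedding f) :
    LogRankLeOne (f '' S) ↔ LogRankLeOne S := by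
  have hsurj : Function.Surjective fun g : Y → ℂ ↦ g ∘ f := hf.injective.surjective_comp_right
  simp only [LogRankLeOne, hsurj.forall, hsurj.exists, isLogOn_image_iff hf,
    continuousOn_image_iff_of_isEmbedding hf, Set.forall_mem_image, Function.comp_apply]
  rfl

theorem hasLogs_of_starConvex {E : Type*} [AddCommGroup E] [Module ℝ E] [TopologicalSpace E]
    [ContinuousAdd E] [ContinuousSMul ℝ E] {S : Set E} {c : E} (hc : c ∈ S)
    (hS : StarConvex ℝ c S) : HasLogs S := by
  classical
  intro g hg hg0
  have segment_mem : ∀ (t : unitInterval) (x : S), (1 - (t : ℝ)) • c + (t : ℝ) • (x : E) ∈ S :=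
    fun t x ↦ hS x.2 (sub_nonneg.mpr t.2.2) t.2.1 (sub_add_cancel _ _)
  let H : C(unitInterval × S, {z : ℂ // z ≠ 0}) :=
    ⟨fun p ↦ ⟨g ((1 - (p.1 : ℝ)) • c + (p.1 : ℝ) • (p.2 : E)), hg0 _ (segment_mem _ _)⟩,
      (hg.comp_continuous (by fun_prop) fun p ↦ segment_mem _ _).subtype_mk _⟩
  have hH₀ : ∀ x, H (0, x) = (⟨_, exp_ne_zero (log (g c))⟩ : {z : ℂ // z ≠ 0}) := fun x ↦
    Subtype.ext (by simp [H, exp_log (hg0 c hc)])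
  let G := isCoveringMap_exp.liftHomotopy H (.const _ (log (g c))) hH₀
  refine ⟨fun x ↦ if hx : x ∈ S then G (1, ⟨x, hx⟩) else 0, ?_, fun x hx ↦ ?_⟩
  · rw [continuousOn_iff_continuous_domRestrict]
    have hG : Continuous fun x : S ↦ G (1, x) := by fun_prop
    convert hG using 2 with x
    simp [Set.domRestrict, x.2]
  · have hlift := congrFun (isCoveringMap_exp.liftHomotopy_lifts H (.const _ (log (g c))) hH₀)
      (1, ⟨x, hx⟩)
    simpa [hx, H, G] using congrArg Subtype.val hlift

theorem eq_zero_of_isLogOn_exp_mul {L : ℝ → ℂ} {m : ℤ}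
    (hL : IsLogOn L (fun t ↦ exp (t * (m * (2 * Real.pi * I)))) (Set.Icc 0 1)) (h01 : L 0 = L 1) :
    m = 0 := by
  have hlin : IsLogOn (fun t : ℝ ↦ t * (m * (2 * Real.pi * I)))
      (fun t ↦ exp (t * (m * (2 * Real.pi * I)))) (Set.Icc 0 1) :=
    ⟨by fun_prop, fun _ _ ↦ rfl⟩
  obtain ⟨k, hk⟩ := hL.exists_sub_eq hlin isPreconnected_Icc
  have h0 := hk 0 (by simp)
  have h1 := hk 1 (by simp)
  rw [h01] at h0
  have hm : (m : ℂ) * (2 * Real.pi * I) = 0 := by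
    push_cast at h0 h1
    linear_combination h0 - h1
  simpa [two_pi_I_ne_zero] using hm

theorem eq_zero_of_isLogOn_zpow_sphere {L : ℂ → ℂ} {m : ℤ} {r : ℝ} (hr : 0 < r)
    (hL : IsLogOn L (fun z ↦ z ^ m) (Metric.sphere 0 r)) : m = 0 := by
  let loop : ℝ → ℂ := fun t ↦ r * exp (t * (2 * Real.pi * I))
  have hloop : IsLogOn (L ∘ loop) ((fun z ↦ z ^ m) ∘ loop) (Set.Icc 0 1) :=
    hL.comp (by fun_prop) fun t _ ↦ by
      have hpolar : loop t = r * exp ((t * (2 * Real.pi) : ℝ) * I) := by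
        simp only [loop]; push_cast; ring_nf
      rw [hpolar, mem_sphere_zero_iff_norm, norm_mul, norm_exp_ofReal_mul_I, norm_real, mul_one,
        Real.norm_of_nonneg hr.le]
  have hrad : exp (log r) = r := exp_log (by exact_mod_cast hr.ne')
  refine eq_zero_of_isLogOn_exp_mul (L := fun t ↦ L (loop t) - m * log r)
    ⟨hloop.1.sub continuousOn_const, fun t ht ↦ ?_⟩ (by simp [loop, exp_two_pi_mul_I])
  have hLt : exp (L (loop t)) = (r * exp (t * (2 * Real.pi * I))) ^ m := hloop.2 t ht
  have hr0 : (r : ℂ) ≠ 0 := by exact_mod_cast hr.ne'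
  change exp (L (loop t) - m * log r) = exp (t * (m * (2 * Real.pi * I)))
  rw [exp_sub, hLt, exp_int_mul, hrad, mul_zpow, mul_div_cancel_left₀ _ (zpow_ne_zero _ hr0),
    ← exp_int_mul]
  ring_nf

end Logarithms

section PuncturedBalls

variable {E : Type*} [NormedAddCommGroup E] [NormedSpace ℝ E]

/-- The complement of the closed ray of nonpositive multiples of `e`. -/
def slitSpace (e : E) : Set E := ((fun t : ℝ ↦ t • e) '' Set.Iic 0)ᶜ

theorem isOpen_slitSpace {e : E} (he : e ≠ 0) : IsOpen (slitSpace e) :=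
  ((isClosedEmbedding_smul_left he).isClosedMap _ isClosed_Iic).isOpen_compl

theorem self_mem_slitSpace {e : E} (he : e ≠ 0) : e ∈ slitSpace e := by
  rintro ⟨t, ht, hte⟩
  have ht1 : t = 1 := smul_left_injective ℝ he (by simpa using hte)
  exact absurd ht (by simp [ht1])

theorem starConvex_slitSpace {e : E} (he : e ≠ 0) : StarConvex ℝ e (slitSpace e) := by
  rintro x hx a b ha hb hab ⟨t, ht, hxt⟩
  rcases hb.eq_or_lt with rfl | hb
  · obtain rfl : a = 1 := by simpa using hab
    exact self_mem_slitSpace he ⟨t, ht, by simpa using hxt⟩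
  · refine hx ⟨b⁻¹ * (t - a), mul_nonpos_of_nonneg_of_nonpos (inv_nonneg.mpr hb.le) ?_, ?_⟩
    · exact sub_nonpos.mpr (le_trans ht ha)
    · have hbx : (t - a) • e = b • x := by rw [sub_smul, sub_eq_iff_eq_add', ← hxt]
      simp only [mul_smul, hbx, inv_smul_smul₀ hb.ne']

theorem hasLogs_slitSpace {e : E} (he : e ≠ 0) : HasLogs (slitSpace e) :=
  hasLogs_of_starConvex (self_mem_slitSpace he) (starConvex_slitSpace he)

theorem slitSpace_union_slitSpace_neg {e : E} (he : e ≠ 0) :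
    slitSpace e ∪ slitSpace (-e) = {0}ᶜ := by
  rw [slitSpace, slitSpace, ← Set.compl_inter]
  congr 1
  ext x
  constructor
  · rintro ⟨⟨s, hs, rfl⟩, t, ht, hst⟩
    have hts : -t = s := smul_left_injective ℝ he (by simpa using hst)
    have : s = 0 := le_antisymm hs (by rw [← hts]; exact neg_nonneg.mpr ht)
    simp [this]
  · rintro rfl
    exact ⟨⟨0, by simp⟩, 0, by simp⟩

theorem slitSpace_inter_slitSpace_neg (e : E) :
    slitSpace e ∩ slitSpace (-e) = (Submodule.span ℝ {e} : Set E)ᶜ := by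
  rw [slitSpace, slitSpace, ← Set.compl_union]
  congr 1
  ext x
  simp only [Set.mem_union, Set.mem_image, Set.mem_Iic, SetLike.mem_coe,
    Submodule.mem_span_singleton]
  constructor
  · rintro (⟨t, -, rfl⟩ | ⟨t, -, rfl⟩)
    exacts [⟨t, rfl⟩, ⟨-t, by simp⟩]
  · rintro ⟨t, rfl⟩
    rcases le_total t 0 with ht | ht
    exacts [.inl ⟨t, ht, rfl⟩, .inr ⟨-t, by simpa, by simp⟩]

theorem hasLogs_compl_singleton_zero (hE : 2 < Module.rank ℝ E) : HasLogs ({0}ᶜ : Set E) := by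
  have : Nontrivial E := rank_pos_iff_nontrivial.mp (two_pos.trans hE)
  obtain ⟨e, he⟩ := exists_ne (0 : E)
  have hcodim : 1 < Module.rank ℝ (E ⧸ Submodule.span ℝ {e}) := by
    by_contra! hle
    have hspan : Module.rank ℝ (Submodule.span ℝ {e}) ≤ 1 := by
      simpa using rank_span_le (R := ℝ) ({e} : Set E)
    have := add_le_add hle hspan
    rw [rank_quotient_add_rank_of_divisionRing, one_add_one_eq_two] at this
    exact hE.not_ge this
  rw [← slitSpace_union_slitSpace_neg he]
  refine (hasLogs_slitSpace he).union (isOpen_slitSpace he) (isOpen_slitSpace (neg_ne_zero.mpr he))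
    (hasLogs_slitSpace (neg_ne_zero.mpr he)) ?_
  rw [slitSpace_inter_slitSpace_neg]
  exact (isConnected_compl_of_one_lt_codim hcodim).isPreconnected

theorem logRankLeOne_compl_singleton_zero : LogRankLeOne ({0}ᶜ : Set (ℝ × ℝ)) := by
  have he : ((1, 0) : ℝ × ℝ) ≠ 0 := by simp
  rw [← slitSpace_union_slitSpace_neg he]
  refine (hasLogs_slitSpace he).logRankLeOne_union (isOpen_slitSpace he)
    (isOpen_slitSpace (neg_ne_zero.mpr he)) (hasLogs_slitSpace (neg_ne_zero.mpr he))
    (C₁ := {x | 0 < x.2}) (C₂ := {x | x.2 < 0})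
    (convex_halfSpace_gt (LinearMap.snd ℝ ℝ ℝ).isLinear 0).isPreconnected
    (convex_halfSpace_lt (LinearMap.snd ℝ ℝ ℝ).isLinear 0).isPreconnected ?_
  rw [slitSpace_inter_slitSpace_neg]
  ext ⟨x, y⟩
  simp [Submodule.mem_span_singleton, Prod.ext_iff, ← ne_eq, ne_comm, lt_or_lt_iff_ne, or_comm]

theorem exists_isEmbedding_image_compl_zero_eq (c : E) {r : ℝ} (hr : 0 < r) :
    ∃ f : E → E, IsEmbedding f ∧ f '' {0}ᶜ = Metric.ball c r ∩ {c}ᶜ := by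
  have hf := (OpenPartialHomeomorph.univBall c r).isOpenEmbedding
    (OpenPartialHomeomorph.univBall_source c r)
  refine ⟨_, hf.isEmbedding, ?_⟩
  rw [← Set.sdiff_eq, Set.image_compl_eq_range_sdiff_image hf.injective, Set.image_singleton,
    OpenPartialHomeomorph.univBall_apply_zero, ← Set.image_univ,
    ← OpenPartialHomeomorph.univBall_source c r, OpenPartialHomeomorph.image_source_eq_target,
    OpenPartialHomeomorph.univBall_target c hr]

/-- Logarithms exist arbitrarily close to the filter `l`; for `l = 𝓝[≠] p` this detects that the
link of `p` has no first cohomology. -/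
def LogTrivial {X : Type*} [TopologicalSpace X] (l : Filter X) : Prop :=
  ∀ U ∈ l, ∃ W ∈ l, W ⊆ U ∧ HasLogs W

/-- `l` has a basis of connected sets of log rank at most one; for `l = 𝓝[≠] p` this says that the
link of `p` is connected and has at most one independent loop, as on a surface with boundary. -/
def LogTame {X : Type*} [TopologicalSpace X] (l : Filter X) : Prop :=
  ∀ U ∈ l, ∃ W ∈ l, W ⊆ U ∧ IsPreconnected W ∧ LogRankLeOne W

theorem forall_mem_map_exists_subset_iff {X Y : Type*} {f : X → Y} {l : Filter X}
    {P : Set Y → Prop} {Q : Set X → Prop} (hf : f.Injective) (hPQ : ∀ W, P (f '' W) ↔ Q W) :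
    (∀ U ∈ l.map f, ∃ W ∈ l.map f, W ⊆ U ∧ P W) ↔ ∀ U ∈ l, ∃ W ∈ l, W ⊆ U ∧ Q W := by
  constructor
  · intro h U hU
    obtain ⟨W, hW, hWU, hP⟩ := h (f '' U) (image_mem_map hU)
    have hWf : f '' (f ⁻¹' W) = W :=
      Set.image_preimage_eq_of_subset (hWU.trans (Set.image_subset_range _ _))
    refine ⟨f ⁻¹' W, hW, ?_, (hPQ _).mp (hWf.symm ▸ hP)⟩
    simpa [hf.preimage_image] using Set.preimage_mono (f := f) hWU
  · intro h U hU
    obtain ⟨W, hW, hWU, hQ⟩ := h _ hU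
    exact ⟨f '' W, image_mem_map hW, Set.image_subset_iff.mpr hWU, (hPQ W).mpr hQ⟩

theorem logTrivial_map_iff {X Y : Type*} [TopologicalSpace X] [TopologicalSpace Y] {f : X → Y}
    {l : Filter X} (hf : IsEmbedding f) : LogTrivial (l.map f) ↔ LogTrivial l :=
  forall_mem_map_exists_subset_iff hf.injective fun _ ↦ hasLogs_image_iff hf

theorem logTame_map_iff {X Y : Type*} [TopologicalSpace X] [TopologicalSpace Y] {f : X → Y}
    {l : Filter X} (hf : IsEmbedding f) : LogTame (l.map f) ↔ LogTame l :=
  forall_mem_map_exists_subset_iff hf.injective fun _ ↦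
    and_congr hf.isInducing.isPreconnected_image (logRankLeOne_image_iff hf)

theorem logTrivial_nhdsNE (hE : 2 < Module.rank ℝ E) (p : E) : LogTrivial (𝓝[≠] p) := by
  intro U hU
  obtain ⟨r, hr, hrU⟩ := Metric.mem_nhdsWithin_iff.mp hU
  obtain ⟨f, hf, hfr⟩ := exists_isEmbedding_image_compl_zero_eq p hr
  exact ⟨_, Metric.nhdsWithin_basis_ball.mem_of_mem hr, hrU,
    hfr ▸ (hasLogs_image_iff hf).mpr (hasLogs_compl_singleton_zero hE)⟩

theorem logTame_nhdsNE (p : ℝ × ℝ) : LogTame (𝓝[≠] p) := by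
  intro U hU
  obtain ⟨r, hr, hrU⟩ := Metric.mem_nhdsWithin_iff.mp hU
  obtain ⟨f, hf, hfr⟩ := exists_isEmbedding_image_compl_zero_eq p hr
  refine ⟨_, Metric.nhdsWithin_basis_ball.mem_of_mem hr, hrU, ?_,
    hfr ▸ (logRankLeOne_image_iff hf).mpr logRankLeOne_compl_singleton_zero⟩
  refine hfr ▸ IsPreconnected.image ?_ f hf.continuous.continuousOn
  exact (isConnected_compl_singleton_of_one_lt_rank (by simp [one_add_one_eq_two]) 0).isPreconnected

theorem not_logTrivial_nhdsNE_zero : ¬ LogTrivial (𝓝[≠] (0 : ℂ)) := by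
  intro h
  obtain ⟨W, hW, hW0, hlogs⟩ := h _ self_mem_nhdsWithin
  obtain ⟨r, hr, hrW⟩ := Metric.mem_nhdsWithin_iff.mp hW
  obtain ⟨L, hL⟩ := hlogs id continuousOn_id hW0
  have hsphere : Metric.sphere (0 : ℂ) (r / 2) ⊆ W := fun z hz ↦
    hrW ⟨Metric.sphere_subset_ball (half_lt_self hr) hz,
      ne_zero_of_mem_sphere (half_pos hr).ne' ⟨z, hz⟩⟩
  exact one_ne_zero (eq_zero_of_isLogOn_zpow_sphere (half_pos hr) (m := 1) (L := L)
    (by simpa using! hL.mono hsphere))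

theorem not_logTrivial_nhdsNE (p : ℝ × ℝ) : ¬ LogTrivial (𝓝[≠] p) := by
  let φ : ℂ ≃ₜ ℝ × ℝ := equivRealProdCLM.toHomeomorph.trans (Homeomorph.addRight p)
  have hφ : φ 0 = p := by simp [φ]
  rw [← hφ, ← φ.map_punctured_nhds_eq, logTrivial_map_iff φ.isEmbedding]
  exact not_logTrivial_nhdsNE_zero

/-- Near a point where `φ` is minimal on `S`, the set `S` minus the point is star shaped about any
point with a larger value of `φ`. -/
theorem logTame_nhdsWithin_of_forall_le {S : Set E} (hS : Convex ℝ S) (φ : E →ₗ[ℝ] ℝ) {p c : E}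
    (hp : p ∈ S) (hφ : ∀ x ∈ S, φ p ≤ φ x) (hc : c ∈ S) (hpc : φ p < φ c) :
    LogTame (𝓝[S \ {p}] p) := by
  intro U hU
  obtain ⟨r, hr, hrU⟩ := Metric.mem_nhdsWithin_iff.mp hU
  let W : Set E := Metric.ball p r ∩ (S \ {p})
  have hline : ∀ᶠ t : ℝ in 𝓝[>] 0, AffineMap.lineMap p c t ∈ Metric.ball p r :=
    (AffineMap.lineMap_continuous.continuousAt.mono_left nhdsWithin_le_nhds).eventually
      (by rw [AffineMap.lineMap_apply_zero]; exact Metric.ball_mem_nhds p hr)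
  obtain ⟨t, htball, ht0, ht1⟩ := (hline.and (Ioo_mem_nhdsGT one_pos)).exists
  set d := AffineMap.lineMap p c t with hd
  have hdS : d ∈ S := hS.lineMap_mem hp hc ⟨ht0.le, ht1.le⟩
  have hpd : φ p < φ d := by
    simp only [hd, AffineMap.lineMap_apply_module', map_add, map_smul, map_sub, smul_eq_mul]
    nlinarith
  have hdW : d ∈ W := ⟨htball, hdS, fun h ↦ hpd.ne (h ▸ rfl)⟩
  have hstar : StarConvex ℝ d W := by
    rintro x ⟨hxball, hxS, hxp⟩ a b ha hb hab
    refine ⟨convex_ball p r htball hxball ha hb hab, hS hdS hxS ha hb hab, fun hp' ↦ ?_⟩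
    have hφp : a * φ d + b * φ x = φ p := by
      simpa using congrArg φ hp'
    have ha0 : ¬ 0 < a := fun ha0 ↦ by
      obtain rfl : b = 1 - a := eq_sub_of_add_eq' hab
      linarith [mul_pos ha0 (sub_pos.mpr hpd), mul_nonneg hb (sub_nonneg.mpr (hφ x hxS))]
    obtain rfl : a = 0 := ha.eq_or_lt'.resolve_right ha0
    obtain rfl : b = 1 := by simpa using hab
    exact hxp (by simpa using hp')
  exact ⟨W, Metric.nhdsWithin_basis_ball.mem_of_mem hr, hrU,
    (hstar.isPathConnected hdW).isConnected.isPreconnected,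
    (hasLogs_of_starConvex hdW hstar).logRankLeOne⟩

end PuncturedBalls

section BandLike

variable {X Y : Type*} [TopologicalSpace X] [TopologicalSpace Y]

/-- The topological properties of the Möbius band that the combinatorial argument uses: it is a
connected surface with boundary whose first cohomology has rank exactly one. Stated through
logarithms, they are shared by the annulus. -/
structure IsBandLike (X : Type*) [TopologicalSpace X] : Prop where
  isPreconnected_univ : IsPreconnected (Set.univ : Set X)
  logRankLeOne_univ : LogRankLeOne (Set.univ : Set X)
  not_hasLogs_univ : ¬ HasLogs (Set.univ : Set X)
  logTame_nhdsNE : ∀ p : X, LogTame (𝓝[≠] p)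
  dense_not_logTrivial : Dense {p : X | ¬ LogTrivial (𝓝[≠] p)}

theorem IsBandLike.of_homeomorph (hX : IsBandLike X) (e : X ≃ₜ Y) : IsBandLike Y where
  isPreconnected_univ := by
    simpa using hX.isPreconnected_univ.image e e.continuous.continuousOn
  logRankLeOne_univ := by
    simpa using (logRankLeOne_image_iff e.isEmbedding).mpr hX.logRankLeOne_univ
  not_hasLogs_univ h := hX.not_hasLogs_univ <| (hasLogs_image_iff e.isEmbedding).mp (by simpa)
  logTame_nhdsNE p := by
    obtain ⟨p, rfl⟩ := e.surjective p
    rw [← e.map_punctured_nhds_eq, logTame_map_iff e.isEmbedding]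
    exact hX.logTame_nhdsNE p
  dense_not_logTrivial := by
    refine (e.surjective.denseRange.dense_image e.continuous hX.dense_not_logTrivial).mono ?_
    rintro _ ⟨p, hp, rfl⟩
    rwa [Set.mem_ofPred_eq, ← e.map_punctured_nhds_eq, logTrivial_map_iff e.isEmbedding]

theorem map_nhdsNE_of_isOpenEmbedding {f : X → Y} (hf : IsOpenEmbedding f) (p : X) :
    map f (𝓝[≠] p) = 𝓝[≠] (f p) := by
  rw [hf.map_nhdsWithin_eq, Set.image_compl_eq_range_sdiff_image hf.injective, Set.image_singleton,
    Set.sdiff_eq, Set.inter_comm, nhdsWithin_inter_of_mem']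
  exact mem_nhdsWithin_of_mem_nhds (hf.isOpen_range.mem_nhds ⟨p, rfl⟩)

end BandLike

section OpenStrip

/-- The unit square without its two vertical sides. -/
def openStrip : Set (ℝ × ℝ) := Set.Ioo 0 1 ×ˢ Set.Icc 0 1

theorem convex_openStrip : Convex ℝ openStrip := (convex_Ioo 0 1).prod (convex_Icc 0 1)

theorem hasLogs_openStrip : HasLogs openStrip :=
  have hc : ((1 / 2, 0) : ℝ × ℝ) ∈ openStrip := ⟨by norm_num, by simp⟩
  hasLogs_of_starConvex hc (convex_openStrip hc)

theorem nhdsWithin_sdiff_singleton_of_mem_nhds {X : Type*} [TopologicalSpace X] {S : Set X} {p : X}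
    (hS : S ∈ 𝓝 p) : 𝓝[S \ {p}] p = 𝓝[≠] p := by
  rw [Set.sdiff_eq, Set.inter_comm, nhdsWithin_inter_of_mem' (mem_nhdsWithin_of_mem_nhds hS)]

theorem logTame_nhdsWithin_openStrip {p : ℝ × ℝ} (hp : p ∈ openStrip) :
    LogTame (𝓝[openStrip \ {p}] p) := by
  have hc : (p.1, 1 / 2) ∈ openStrip := ⟨hp.1, by norm_num⟩
  rcases hp.2.1.eq_or_lt with h0 | h0
  · exact logTame_nhdsWithin_of_forall_le convex_openStrip (LinearMap.snd ℝ ℝ ℝ) hp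
      (fun x hx ↦ by simpa [← h0] using hx.2.1) hc (by simp [← h0])
  rcases hp.2.2.eq_or_lt with h1 | h1
  · exact logTame_nhdsWithin_of_forall_le convex_openStrip (-LinearMap.snd ℝ ℝ ℝ) hp
      (fun x hx ↦ by simpa [h1] using hx.2.2) hc (by norm_num [h1])
  · have hmem : openStrip ∈ 𝓝 p := prod_mem_nhds (Ioo_mem_nhds hp.1.1 hp.1.2) (Icc_mem_nhds h0 h1)
    rw [nhdsWithin_sdiff_singleton_of_mem_nhds hmem]
    exact logTame_nhdsNE p

theorem map_val_nhdsNE {X : Type*} [TopologicalSpace X] {S : Set X} (p : S) :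
    map Subtype.val (𝓝[≠] p) = 𝓝[S \ {p.1}] p.1 := by
  rw [IsEmbedding.subtypeVal.map_nhdsWithin_eq, Set.image_compl_eq_range_sdiff_image
    Subtype.val_injective, Subtype.range_coe, Set.image_singleton]

theorem dense_not_logTrivial_openStrip : Dense {p : openStrip | ¬ LogTrivial (𝓝[≠] p)} := by
  intro p
  let slide : ℝ → ℝ × ℝ := fun t ↦ (p.1.1, AffineMap.lineMap p.1.2 (1 / 2) t)
  have hslide : Tendsto slide (𝓝[>] 0) (𝓝 p.1) := by
    have : Continuous slide := by fun_prop
    exact (this.tendsto' 0 p.1 (by simp [slide])).mono_left nhdsWithin_le_nhds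
  rw [Metric.mem_closure_iff]
  intro ε hε
  obtain ⟨t, htε, ht0, ht1⟩ :=
    ((hslide.eventually (Metric.ball_mem_nhds _ hε)).and (Ioo_mem_nhdsGT one_pos)).exists
  have hy : (slide t).2 ∈ Set.Ioo (0 : ℝ) 1 := by
    obtain ⟨h0, h1⟩ := p.2.2
    simp only [slide, AffineMap.lineMap_apply_module, smul_eq_mul, Set.mem_Ioo]
    constructor <;> nlinarith
  let q : openStrip := ⟨slide t, p.2.1, hy.1.le, hy.2.le⟩
  have hq : openStrip ∈ 𝓝 q.1 :=
    prod_mem_nhds (Ioo_mem_nhds p.2.1.1 p.2.1.2) (Icc_mem_nhds hy.1 hy.2)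
  refine ⟨q, ?_, by rwa [dist_comm]⟩
  rw [Set.mem_ofPred_eq, ← logTrivial_map_iff IsEmbedding.subtypeVal, map_val_nhdsNE,
    nhdsWithin_sdiff_singleton_of_mem_nhds hq]
  exact not_logTrivial_nhdsNE _

end OpenStrip

namespace MobiusBand

/-- The standard Möbius band in `ℂ × ℂ`, unrolled: the fibre over the point `e^{2πix}` of the circle
is the segment through the origin in the direction `e^{πix}`. -/
noncomputable def unrolling (p : ℝ × ℝ) : ℂ × ℂ :=
  (exp (p.1 * (2 * Real.pi * I)), (2 * p.2 - 1) * exp (p.1 * (Real.pi * I)))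

/-- The Möbius band as a subset of `ℂ × ℂ`. -/
def model : Set (ℂ × ℂ) := unrolling '' (Set.univ ×ˢ Set.Icc 0 1)

theorem continuous_unrolling : Continuous unrolling := by unfold unrolling; fun_prop

theorem unrolling_add_one (x y : ℝ) : unrolling (x + 1, y) = unrolling (x, 1 - y) := by
  simp only [unrolling, ofReal_add, ofReal_one, ofReal_sub, add_mul, one_mul, exp_add,
    exp_two_pi_mul_I, exp_pi_mul_I]
  ext1 <;> ring

theorem exists_unrolling_add_int (n : ℤ) (x : ℝ) {y : ℝ} (hy : y ∈ Set.Icc (0 : ℝ) 1) :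
    ∃ y' ∈ Set.Icc (0 : ℝ) 1, unrolling (x + n, y) = unrolling (x, y') := by
  have hflip : ∀ y ∈ Set.Icc (0 : ℝ) 1, 1 - y ∈ Set.Icc (0 : ℝ) 1 := fun y hy ↦
    ⟨by linarith [hy.2], by linarith [hy.1]⟩
  induction n generalizing y with
  | zero => exact ⟨y, hy, by simp⟩
  | succ n ih =>
    obtain ⟨y', hy', h⟩ := ih (hflip y hy)
    exact ⟨y', hy', by rw [← h, ← unrolling_add_one]; push_cast; ring_nf⟩
  | pred n ih =>
    obtain ⟨y', hy', h⟩ := ih (hflip y hy)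
    refine ⟨y', hy', ?_⟩
    rw [← h, ← sub_sub_cancel 1 y, ← unrolling_add_one]
    push_cast
    ring_nf

theorem exists_mem_Ico_unrolling_eq {q : ℂ × ℂ} (hq : q ∈ model) :
    ∃ x ∈ Set.Ico (0 : ℝ) 1, ∃ y ∈ Set.Icc (0 : ℝ) 1, unrolling (x, y) = q := by
  obtain ⟨⟨x, y⟩, ⟨-, hy⟩, rfl⟩ := hq
  obtain ⟨y', hy', h⟩ := exists_unrolling_add_int ⌊x⌋ (Int.fract x) hy
  exact ⟨Int.fract x, ⟨Int.fract_nonneg x, Int.fract_lt_one x⟩, y', hy', by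
    rw [← h, Int.fract_add_floor]⟩

/-- The inverse of `unrolling` away from the fibre over `1`; the base point `-e^{2πix}` is used
because `arg` jumps at the negative real axis. -/
noncomputable def coords (q : ℂ × ℂ) : ℝ × ℝ :=
  let x : ℝ := (arg (-q.1) + Real.pi) / (2 * Real.pi)
  (x, ((q.2 * exp (-(x * (Real.pi * I)))).re + 1) / 2)

theorem neg_exp_eq (x : ℝ) :
    -exp (x * (2 * Real.pi * I)) = exp ((2 * Real.pi * x - Real.pi : ℝ) * I) := by
  push_cast
  rw [sub_mul, exp_sub, exp_pi_mul_I]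
  ring_nf

theorem coords_unrolling {x : ℝ} (hx : x ∈ Set.Ioc (0 : ℝ) 1) (y : ℝ) :
    coords (unrolling (x, y)) = (x, y) := by
  have hpi := Real.pi_pos
  have harg : arg (-(unrolling (x, y)).1) = 2 * Real.pi * x - Real.pi := by
    rw [unrolling, neg_exp_eq, arg_exp_mul_I, toIocMod_eq_self]
    constructor <;> nlinarith [hx.1, hx.2]
  have hx' : (arg (-(unrolling (x, y)).1) + Real.pi) / (2 * Real.pi) = x := by
    rw [harg]; field_simp; ring
  simp only [coords, hx']
  rw [unrolling, mul_assoc, ← exp_add, add_neg_cancel, exp_zero, mul_one]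
  norm_cast
  simp

theorem neg_mem_slitPlane {q : ℂ × ℂ} (hq : q ∈ model) (hq1 : q.1 ≠ 1) : -q.1 ∈ slitPlane := by
  obtain ⟨p, -, rfl⟩ := hq
  have hnorm : ‖(unrolling p).1‖ = 1 := by
    rw [← norm_neg, unrolling, neg_exp_eq, norm_exp_ofReal_mul_I]
  by_contra! hslit
  obtain ⟨hre, him⟩ : 0 ≤ (unrolling p).1.re ∧ (unrolling p).1.im = 0 := by
    simpa [mem_slitPlane_iff] using hslit
  have hreal : (unrolling p).1 = (unrolling p).1.re := Complex.ext rfl (by simpa using him)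
  rw [hreal, norm_real, Real.norm_of_nonneg hre] at hnorm
  exact hq1 (by rw [hreal, hnorm, ofReal_one])

theorem continuousOn_coords : ContinuousOn coords (model ∩ {q | q.1 ≠ 1}) := by
  have harg : ContinuousOn (fun q : ℂ × ℂ ↦ arg (-q.1)) (model ∩ {q | q.1 ≠ 1}) := fun q hq ↦
    (ContinuousAt.comp (f := fun q : ℂ × ℂ ↦ -q.1) (continuousAt_arg (neg_mem_slitPlane hq.1 hq.2))
      (by fun_prop)).continuousWithinAt
  unfold coords
  fun_prop (disch := simp [Real.pi_ne_zero])

theorem unrolling_fst_eq_one_iff {x : ℝ} (y : ℝ) :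
    (unrolling (x, y)).1 = 1 ↔ ∃ n : ℤ, x = n := by
  simp only [unrolling, exp_eq_one_iff]
  refine exists_congr fun n ↦ ?_
  rw [mul_left_inj' two_pi_I_ne_zero]
  norm_cast

theorem unrolling_fst_ne_one {x : ℝ} (hx : x ∈ Set.Ioo (0 : ℝ) 1) (y : ℝ) :
    (unrolling (x, y)).1 ≠ 1 := by
  rw [Ne, unrolling_fst_eq_one_iff]
  rintro ⟨n, rfl⟩
  have h0 : 0 < n := by exact_mod_cast hx.1
  have h1 : n < 1 := by exact_mod_cast hx.2
  omega

theorem unrolling_mem_model {p : ℝ × ℝ} (hp : p.2 ∈ Set.Icc (0 : ℝ) 1) : unrolling p ∈ model :=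
  ⟨p, ⟨trivial, hp⟩, rfl⟩

theorem exists_mem_openStrip_unrolling_eq {q : ℂ × ℂ} (hq : q ∈ model) (hq1 : q.1 ≠ 1) :
    ∃ p ∈ openStrip, unrolling p = q := by
  obtain ⟨x, hx, y, hy, rfl⟩ := exists_mem_Ico_unrolling_eq hq
  refine ⟨(x, y), ⟨⟨hx.1.lt_of_ne' ?_, hx.2⟩, hy⟩, rfl⟩
  rintro rfl
  exact hq1 (by simp [unrolling])

/-- The chart of the band away from the fibre over `1`. -/
noncomputable def chart (p : openStrip) : model := ⟨unrolling p, unrolling_mem_model p.2.2⟩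

theorem range_chart : Set.range chart = {q | q.1.1 ≠ 1} := by
  ext q
  constructor
  · rintro ⟨p, rfl⟩
    exact unrolling_fst_ne_one p.2.1 _
  · intro hq
    obtain ⟨p, hp, hpq⟩ := exists_mem_openStrip_unrolling_eq q.2 hq
    exact ⟨⟨p, hp⟩, Subtype.ext hpq⟩

theorem continuous_chart : Continuous chart :=
  (continuous_unrolling.comp continuous_subtype_val).subtype_mk _

theorem isOpenEmbedding_chart : IsOpenEmbedding chart := by
  have hinv : ∀ p : openStrip, coords (chart p) = p := fun p ↦
    coords_unrolling (Set.Ioo_subset_Ioc_self p.2.1) _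
  have hcoords : ContinuousOn (fun q : model ↦ coords q) (Set.range chart) := by
    rw [range_chart]
    exact continuousOn_coords.comp continuous_subtype_val.continuousOn fun q hq ↦ ⟨q.2, hq⟩
  refine .of_continuous_injective_isOpenMap continuous_chart
    (fun p p' h ↦ Subtype.ext (by rw [← hinv p, h, hinv p'])) ?_
  rintro _ ⟨V, hV, rfl⟩
  have himage : chart '' (Subtype.val ⁻¹' V) = Set.range chart ∩ (fun q ↦ coords q.1) ⁻¹' V := by
    ext q
    constructor
    · rintro ⟨p, hp, rfl⟩
      exact ⟨⟨p, rfl⟩, by simpa [hinv p] using hp⟩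
    · rintro ⟨⟨p, rfl⟩, hp⟩
      exact ⟨p, by simpa [hinv p] using hp, rfl⟩
  have hopen : IsOpen (Set.range chart) := by
    rw [range_chart]
    exact isOpen_ne_fun (by fun_prop) continuous_const
  rw [himage]
  exact hcoords.isOpen_inter_preimage hopen hV

theorem unrolling_add_half (x y : ℝ) :
    unrolling (x + 1 / 2, y) = (-(unrolling (x, y)).1, I * (unrolling (x, y)).2) := by
  have h₁ : ((x + 1 / 2 : ℝ) : ℂ) * (2 * Real.pi * I) =
      x * (2 * Real.pi * I) + Real.pi * I := by push_cast; ring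
  have h₂ : ((x + 1 / 2 : ℝ) : ℂ) * (Real.pi * I) =
      x * (Real.pi * I) + Real.pi / 2 * I := by push_cast; ring
  simp only [unrolling, h₁, h₂, exp_add, exp_pi_mul_I, exp_pi_div_two_mul_I]
  ext1 <;> ring

theorem unrolling_fst_eq_neg_one_iff {x : ℝ} (hx : x ∈ Set.Ioo (0 : ℝ) 1) (y : ℝ) :
    (unrolling (x, y)).1 = -1 ↔ x = 1 / 2 := by
  have hhalf : (unrolling (x + 1 / 2, y)).1 = -(unrolling (x, y)).1 :=
    congrArg Prod.fst (unrolling_add_half x y)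
  rw [← neg_eq_iff_eq_neg, ← hhalf, unrolling_fst_eq_one_iff]
  constructor
  · rintro ⟨n, hn⟩
    have h0 : 0 < n := by exact_mod_cast (by linarith [hx.1] : (0 : ℝ) < n)
    have h2 : n < 2 := by exact_mod_cast (by linarith [hx.2] : (n : ℝ) < 2)
    obtain rfl : n = 1 := by omega
    push_cast at hn
    linarith
  · rintro rfl
    exact ⟨1, by norm_num⟩

/-- Rotation of the band by half a turn. -/
noncomputable def halfTurn : model ≃ₜ model where
  toFun q := ⟨(-q.1.1, I * q.1.2), by
    obtain ⟨_, ⟨x, y⟩, hp, rfl⟩ := q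
    exact ⟨(x + 1 / 2, y), hp, unrolling_add_half x y⟩⟩
  invFun q := ⟨(-q.1.1, -I * q.1.2), by
    obtain ⟨_, ⟨x, y⟩, hp, rfl⟩ := q
    refine ⟨(x - 1 / 2, y), hp, ?_⟩
    have h := unrolling_add_half (x - 1 / 2) y
    rw [sub_add_cancel] at h
    simp [h, ← mul_assoc]⟩
  left_inv q := by ext <;> simp [← mul_assoc]
  right_inv q := by ext <;> simp [← mul_assoc]

theorem exists_isOpenEmbedding_openStrip (q : model) :
    ∃ f : openStrip → model, IsOpenEmbedding f ∧ q ∈ Set.range f := by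
  by_cases hq : q.1.1 = 1
  · refine ⟨halfTurn ∘ chart, halfTurn.isOpenEmbedding.comp isOpenEmbedding_chart, ?_⟩
    have : halfTurn.symm q ∈ Set.range chart := by
      rw [range_chart]
      change -q.1.1 ≠ 1
      norm_num [hq]
    rwa [Set.range_comp, ← halfTurn.preimage_symm]
  · exact ⟨chart, isOpenEmbedding_chart, range_chart ▸ hq⟩

theorem hasLogs_univ_openStrip : HasLogs (Set.univ : Set openStrip) := by
  rw [← hasLogs_image_iff IsEmbedding.subtypeVal, Set.image_univ, Subtype.range_coe]
  exact hasLogs_openStrip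

theorem logRankLeOne_univ_model : LogRankLeOne (Set.univ : Set model) := by
  let S : Set model := {q | q.1.1 ≠ 1}
  let T : Set model := {q | q.1.1 ≠ -1}
  have hS : chart '' Set.univ = S := by rw [Set.image_univ, range_chart]
  have hT : (halfTurn ∘ chart) '' Set.univ = T := by
    rw [Set.image_univ, Set.range_comp, ← halfTurn.preimage_symm, range_chart]
    ext q
    exact neg_eq_iff_eq_neg.not
  have hST : S ∪ T = Set.univ := by
    ext q
    simp only [S, T, Set.mem_union, Set.mem_ofPred_eq, Set.mem_univ, iff_true]
    by_cases h : q.1.1 = 1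
    · exact .inr (by norm_num [h])
    · exact .inl h
  have hhalf : ∀ P : Set ℝ, Convex ℝ P → IsPreconnected (chart '' {p | p.1.1 ∈ P}) := by
    intro P hP
    refine IsPreconnected.image ?_ _ continuous_chart.continuousOn
    refine IsInducing.subtypeVal.isPreconnected_image.mp ?_
    have hconv : Convex ℝ (openStrip ∩ (LinearMap.fst ℝ ℝ ℝ) ⁻¹' P) :=
      convex_openStrip.inter (hP.linear_preimage _)
    have himage := Subtype.image_preimage_coe openStrip ((LinearMap.fst ℝ ℝ ℝ) ⁻¹' P)
    exact (himage ▸ hconv).isPreconnected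
  rw [← hST]
  refine HasLogs.logRankLeOne_union (hS ▸ ?_) (hT ▸ ?_) (hS ▸ ?_) (hT ▸ ?_)
    (hhalf (Set.Iio (1 / 2)) (convex_Iio _)) (hhalf (Set.Ioi (1 / 2)) (convex_Ioi _)) ?_
  · exact isOpenEmbedding_chart.isOpenMap _ isOpen_univ
  · exact (halfTurn.isOpenEmbedding.comp isOpenEmbedding_chart).isOpenMap _ isOpen_univ
  · exact (hasLogs_image_iff isOpenEmbedding_chart.isEmbedding).mpr hasLogs_univ_openStrip
  · exact (hasLogs_image_iff (halfTurn.isEmbedding.comp isOpenEmbedding_chart.isEmbedding)).mpr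
      hasLogs_univ_openStrip
  · rw [← hS, ← Set.image_inter_preimage, Set.univ_inter, ← Set.image_union]
    congr 1
    ext p
    exact (unrolling_fst_eq_neg_one_iff p.2.1 p.1.2).not.trans ne_iff_lt_or_gt

theorem not_hasLogs_univ_model : ¬ HasLogs (Set.univ : Set model) := by
  intro h
  obtain ⟨L, hL⟩ := h (fun q ↦ q.1.1) (by fun_prop) (by
    rintro ⟨_, p, -, rfl⟩ -
    exact exp_ne_zero _)
  let core : ℝ → model := fun t ↦ ⟨unrolling (t, 1 / 2), unrolling_mem_model (by norm_num)⟩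
  have hcore : Continuous core :=
    (continuous_unrolling.comp (by fun_prop)).subtype_mk _
  have hclosed : core 0 = core 1 := Subtype.ext <| by
    have := unrolling_add_one 0 (1 / 2)
    norm_num at this
    exact this.symm
  have hcomp := hL.comp hcore.continuousOn (Set.mapsTo_univ core (Set.Icc 0 1))
  refine one_ne_zero (eq_zero_of_isLogOn_exp_mul (m := 1) (L := L ∘ core) ?_ (by
    rw [Function.comp_apply, Function.comp_apply, hclosed]))
  simpa using! hcomp

theorem isBandLike_model : IsBandLike model where
  isPreconnected_univ := by
    rw [← IsInducing.subtypeVal.isPreconnected_image, Set.image_univ, Subtype.range_coe]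
    exact (convex_univ.prod (convex_Icc 0 1)).isPreconnected.image _
      continuous_unrolling.continuousOn
  logRankLeOne_univ := logRankLeOne_univ_model
  not_hasLogs_univ := not_hasLogs_univ_model
  logTame_nhdsNE q := by
    obtain ⟨f, hf, p, rfl⟩ := exists_isOpenEmbedding_openStrip q
    rw [← map_nhdsNE_of_isOpenEmbedding hf, logTame_map_iff hf.isEmbedding,
      ← logTame_map_iff IsEmbedding.subtypeVal, map_val_nhdsNE]
    exact logTame_nhdsWithin_openStrip p.2
  dense_not_logTrivial q := by
    obtain ⟨f, hf, p, rfl⟩ := exists_isOpenEmbedding_openStrip q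
    refine closure_mono ?_ (image_closure_subset_closure_image hf.continuous
      ⟨p, dense_not_logTrivial_openStrip p, rfl⟩)
    rintro _ ⟨p, hp, rfl⟩
    rwa [Set.mem_ofPred_eq, ← map_nhdsNE_of_isOpenEmbedding hf, logTrivial_map_iff hf.isEmbedding]

theorem unrolling_eq_of_rel {a b : UnitSquare}
    (h : (a : ℝ × ℝ).1 = 0 ∧ (b : ℝ × ℝ).1 = 1 ∧ (b : ℝ × ℝ).2 = 1 - (a : ℝ × ℝ).2) :
    unrolling a = unrolling b := by
  obtain ⟨⟨x, y⟩, _⟩ := a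
  obtain ⟨⟨x', y'⟩, _⟩ := b
  obtain ⟨rfl, rfl, rfl⟩ := h
  simpa using (unrolling_add_one 0 (1 - y)).symm

/-- The comparison map from the quotient of the square to the model. -/
noncomputable def toModel : MobiusBand → model :=
  Quot.lift (fun p ↦ ⟨unrolling p, unrolling_mem_model p.2.2⟩) fun _ _ h ↦
    Subtype.ext (unrolling_eq_of_rel h)

theorem continuous_toModel : Continuous toModel :=
  continuous_coinduced_dom.mpr ((continuous_unrolling.comp continuous_subtype_val).subtype_mk _)

theorem toModel_surjective : toModel.Surjective := by
  intro q
  obtain ⟨x, hx, y, hy, hq⟩ := exists_mem_Ico_unrolling_eq q.2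
  exact ⟨Quot.mk _ ⟨(x, y), Set.Ico_subset_Icc_self hx, hy⟩, Subtype.ext hq⟩

theorem exists_mem_Ioc_mk_eq (q : MobiusBand) :
    ∃ p : UnitSquare, p.1.1 ∈ Set.Ioc (0 : ℝ) 1 ∧ Quot.mk _ p = q := by
  obtain ⟨⟨⟨x, y⟩, hx, hy⟩⟩ := q
  obtain rfl | hx0 := eq_or_ne x 0
  · exact ⟨⟨(1, 1 - y), ⟨zero_le_one, le_rfl⟩, by linarith [hy.2], by linarith [hy.1]⟩,
      ⟨zero_lt_one, le_rfl⟩, (Quot.sound ⟨rfl, rfl, rfl⟩).symm⟩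
  · exact ⟨_, ⟨hx.1.lt_of_ne' hx0, hx.2⟩, rfl⟩

theorem toModel_injective : toModel.Injective := by
  intro q q' h
  obtain ⟨p, hp, rfl⟩ := exists_mem_Ioc_mk_eq q
  obtain ⟨p', hp', rfl⟩ := exists_mem_Ioc_mk_eq q'
  have h : unrolling p = unrolling p' := congrArg Subtype.val h
  rw [Subtype.ext ((coords_unrolling hp _).symm.trans ((congrArg coords h).trans
    (coords_unrolling hp' _)))]

theorem isBandLike : IsBandLike MobiusBand := by
  have : CompactSpace UnitSquare := isCompact_iff_compactSpace.mp (isCompact_Icc.prod isCompact_Icc)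
  have : CompactSpace MobiusBand := inferInstanceAs (CompactSpace (Quot _))
  let e : MobiusBand ≃ model := .ofBijective toModel ⟨toModel_injective, toModel_surjective⟩
  exact isBandLike_model.of_homeomorph
    (Continuous.homeoOfEquivCompactToT2 (f := e) continuous_toModel).symm

end MobiusBand

theorem IsBandLike.logTame_nhdsWithin {X : Type*} [TopologicalSpace X] {S : Set X}
    (hS : IsBandLike S) {p : X} (hp : p ∈ S) : LogTame (𝓝[S \ {p}] p) := by
  rw [← map_val_nhdsNE ⟨p, hp⟩, logTame_map_iff IsEmbedding.subtypeVal]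
  exact hS.logTame_nhdsNE _

namespace SComplex

theorem reflTransGen_of_isPreconnected {V : Type*} {r : V → V → Prop} {S : Set (V → ℝ)} {D : Set V}
    (hS : IsPreconnected S) (hD : ∀ f ∈ S, ∃ x ∈ D, f x ≠ 0)
    (hr : ∀ f ∈ S, ∀ x ∈ D, ∀ y ∈ D, f x ≠ 0 → f y ≠ 0 → r x y)
    {f g : V → ℝ} (hf : f ∈ S) (hg : g ∈ S) {x y : V} (hx : x ∈ D) (hy : y ∈ D) (hfx : f x ≠ 0)
    (hgy : g y ≠ 0) : Relation.ReflTransGen r x y := by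
  by_contra hxy
  have hopen : ∀ P : V → Prop, IsOpen {f : V → ℝ | ∃ z ∈ D, P z ∧ f z ≠ 0} := fun P ↦ by
    simp only [Set.ofPred_exists, Set.ofPred_and]
    exact isOpen_iUnion fun z ↦ .inter (by simp) <| .inter (by simp)
      (isOpen_ne_fun (continuous_apply z) continuous_const)
  obtain ⟨p, hpS, ⟨a, haD, ha, hpa⟩, ⟨b, hbD, hb, hpb⟩⟩ :=
    hS _ _ (hopen (Relation.ReflTransGen r x)) (hopen fun z ↦ ¬ Relation.ReflTransGen r x z)
      (fun p hp ↦ by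
        obtain ⟨z, hz, hpz⟩ := hD p hp
        by_cases hxz : Relation.ReflTransGen r x z
        exacts [.inl ⟨z, hz, hxz, hpz⟩, .inr ⟨z, hz, hxz, hpz⟩])
      ⟨f, hf, x, hx, .refl, hfx⟩ ⟨g, hg, y, hy, hxy, hgy⟩
  exact hb (ha.tail (hr p hpS a haD b hbD hpa hpb))

section Cell

variable {V : Type} [Fintype V] {σ τ : Finset V}

/-- The closed simplex spanned by `σ`. -/
def cell (σ : Finset V) : Set (V → ℝ) := {f ∈ stdSimplex ℝ V | ∀ v ∉ σ, f v = 0}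

theorem convex_cell (σ : Finset V) : Convex ℝ (cell σ) := by
  refine (convex_stdSimplex ℝ V).inter fun f hf g hg a b _ _ _ v hv ↦ ?_
  simp [hf v hv, hg v hv]

theorem isClosed_cell (σ : Finset V) : IsClosed (cell σ) := by
  have hzero : IsClosed {f : V → ℝ | ∀ v ∉ σ, f v = 0} := by
    simp only [Set.ofPred_forall]
    exact isClosed_iInter fun v ↦ isClosed_iInter fun _ ↦
      isClosed_eq (continuous_apply v) continuous_const
  exact (isClosed_stdSimplex ℝ V).inter hzero

theorem cell_mono (h : σ ⊆ τ) : cell σ ⊆ cell τ := fun _ hf ↦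
  ⟨hf.1, fun v hv ↦ hf.2 v fun hvσ ↦ hv (h hvσ)⟩

theorem mem_of_mem_cell {f : V → ℝ} (hf : f ∈ cell σ) {v : V} (hv : f v ≠ 0) : v ∈ σ := by
  by_contra hvσ
  exact hv (hf.2 v hvσ)

theorem sum_eq_one_of_mem_cell {f : V → ℝ} (hf : f ∈ cell σ) : ∑ v ∈ σ, f v = 1 := by
  rw [← hf.1.2]
  exact sum_subset (subset_univ σ) fun v _ hv ↦ hf.2 v hv

theorem exists_ne_zero_of_mem_stdSimplex {f : V → ℝ} (hf : f ∈ stdSimplex ℝ V) : ∃ v, f v ≠ 0 := by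
  obtain ⟨v, -, hv⟩ := exists_ne_zero_of_sum_ne_zero (hf.2 ▸ one_ne_zero)
  exact ⟨v, hv⟩

end Cell

variable {V : Type} [DecidableEq V] {M : SComplex V} {σ τ : Finset V}

section Faces

theorem mem_vertices {v : V} : v ∈ M.vertices ↔ {v} ∈ M.faces := by
  refine mem_sup.trans ⟨?_, fun h ↦ ⟨_, h, mem_singleton_self v⟩⟩
  rintro ⟨σ, hσ, hv⟩
  exact M.down_closed σ hσ _ (singleton_subset_iff.mpr hv) (singleton_nonempty v)

theorem singleton_mem_faces (hσ : σ ∈ M.faces) {v : V} (hv : v ∈ σ) : {v} ∈ M.faces :=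
  M.down_closed σ hσ _ (singleton_subset_iff.mpr hv) (singleton_nonempty v)

theorem mem_faces_link {v : V} (hv : v ∉ τ) (hτ : τ.Nonempty) :
    τ ∈ (M.link {v}).faces ↔ insert v τ ∈ M.faces := by
  refine Finset.mem_filter.trans ?_
  rw [singleton_inter_of_notMem hv, ← insert_eq, eq_self, true_and]
  exact and_iff_right_of_imp fun h ↦ M.down_closed _ h _ (subset_insert v τ) hτ

theorem notMem_of_mem_faces_link {v : V} (hτ : τ ∈ (M.link {v}).faces) : v ∉ τ := fun hv ↦
  singleton_ne_empty v ((singleton_inter_of_mem hv).symm.trans (mem_filter.mp hτ).2.1)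

end Faces

section Realization

variable [Fintype V]

theorem single_mem_cell {v : V} (hv : v ∈ σ) : Pi.single v 1 ∈ cell σ :=
  ⟨single_mem_stdSimplex ℝ v, fun _ hw ↦ Pi.single_eq_of_ne (ne_of_mem_of_not_mem hv hw).symm 1⟩

theorem eq_single_of_mem_stdSimplex {f : V → ℝ} (hf : f ∈ stdSimplex ℝ V) {v : V}
    (h : ∀ w ≠ v, f w = 0) : f = Pi.single v 1 := by
  have hv : f v = 1 := by rw [← hf.2, Fintype.sum_eq_single v h]
  ext w
  obtain rfl | hw := eq_or_ne w v
  · rw [hv, Pi.single_eq_same]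
  · rw [h w hw, Pi.single_eq_of_ne hw]

theorem mem_realization_iff {f : V → ℝ} : f ∈ M.realization ↔ ∃ σ ∈ M.faces, f ∈ cell σ :=
  exists_congr fun _ ↦ and_congr_right fun _ ↦ and_comm

theorem cell_subset_realization (hσ : σ ∈ M.faces) : cell σ ⊆ M.realization :=
  fun _ hf ↦ mem_realization_iff.mpr ⟨σ, hσ, hf⟩

theorem realization_mono {M' : SComplex V} (h : M.faces ⊆ M'.faces) :
    M.realization ⊆ M'.realization := fun _ ⟨σ, hσ, hf⟩ ↦ ⟨σ, h hσ, hf⟩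

theorem realization_subset_stdSimplex : M.realization ⊆ stdSimplex ℝ V := fun _ hf ↦
  have ⟨_, _, hfσ⟩ := mem_realization_iff.mp hf
  hfσ.1

theorem mem_faces_of_forall_ne_zero {f : V → ℝ} (hf : f ∈ M.realization) (hτ : τ.Nonempty)
    (hfτ : ∀ v ∈ τ, f v ≠ 0) : τ ∈ M.faces := by
  obtain ⟨σ, hσ, hfσ⟩ := mem_realization_iff.mp hf
  exact M.down_closed σ hσ τ (fun v hv ↦ mem_of_mem_cell hfσ (hfτ v hv)) hτ

theorem connected_of_isPreconnected (h : IsPreconnected M.realization) : M.Connected := by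
  intro u hu w hw
  have hmem : ∀ {v}, v ∈ M.vertices → Pi.single v 1 ∈ M.realization := fun hv ↦
    cell_subset_realization (mem_vertices.mp hv) (single_mem_cell (mem_singleton_self _))
  refine reflTransGen_of_isPreconnected (D := Set.univ) h (fun f hf ↦ ?_)
    (fun f hf x _ y _ hx hy ↦ mem_faces_of_forall_ne_zero hf (insert_nonempty _ _) ?_)
    (hmem hu) (hmem hw) trivial trivial (by simp) (by simp)
  · simpa using exists_ne_zero_of_mem_stdSimplex (realization_subset_stdSimplex hf)
  · simp [hx, hy]

theorem exists_mem_apply_ne_zero_of_mem_nhdsWithin {v x : V} (hx : x ≠ v)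
    (hvx : {v, x} ∈ M.faces) {W : Set (V → ℝ)}
    (hW : W ∈ 𝓝[M.realization \ {Pi.single v 1}] (Pi.single v 1)) : ∃ f ∈ W, f x ≠ 0 := by
  let path : ℝ → V → ℝ :=
    AffineMap.lineMap (Pi.single v 1 : V → ℝ) (Pi.single x 1 : V → ℝ)
  have hx_path : ∀ t, path t x = t := fun t ↦ by
    simp [path, AffineMap.lineMap_apply_module, hx]
  have hpath : Tendsto path (𝓝[>] 0) (𝓝[M.realization \ {Pi.single v 1}] (Pi.single v 1)) := by
    refine tendsto_nhdsWithin_iff.mpr ⟨?_, ?_⟩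
    · exact (AffineMap.lineMap_continuous.tendsto' 0 _ (AffineMap.lineMap_apply_zero _ _)).mono_left
        nhdsWithin_le_nhds
    · filter_upwards [Ioo_mem_nhdsGT one_pos] with t ht
      refine ⟨cell_subset_realization hvx ((convex_cell _).lineMap_mem (single_mem_cell (by simp))
        (single_mem_cell (by simp)) ⟨ht.1.le, ht.2.le⟩), fun h ↦ ht.1.ne ?_⟩
      rw [← hx_path t, h, Pi.single_eq_of_ne hx]
  obtain ⟨t, htW, ht⟩ := ((hpath.eventually hW).and self_mem_nhdsWithin).exists
  exact ⟨path t, htW, by rw [hx_path]; exact ht.ne'⟩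

theorem connected_link {v : V}
    (h : LogTame (𝓝[M.realization \ {Pi.single v 1}] (Pi.single v 1))) :
    (M.link {v}).Connected := by
  have hU : {f : V → ℝ | f v ≠ 0} ∈ 𝓝[M.realization \ {Pi.single v 1}] (Pi.single v 1) :=
    mem_nhdsWithin_of_mem_nhds <|
      (isOpen_ne_fun (continuous_apply v) continuous_const).mem_nhds (by simp)
  obtain ⟨W, hW, hWU, hWc, -⟩ := h _ (inter_mem hU self_mem_nhdsWithin)
  have hmem : ∀ x ∈ (M.link {v}).vertices, x ≠ v ∧ ∃ f ∈ W, f x ≠ 0 := fun x hx ↦ by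
    have hxv : v ∉ {x} := notMem_of_mem_faces_link (mem_vertices.mp hx)
    rw [mem_vertices, mem_faces_link hxv (singleton_nonempty x)] at hx
    have hxv : x ≠ v := by simpa [eq_comm] using hxv
    exact ⟨hxv, exists_mem_apply_ne_zero_of_mem_nhdsWithin hxv hx hW⟩
  intro u hu w hw
  obtain ⟨huv, f, hf, hfu⟩ := hmem u hu
  obtain ⟨hwv, g, hg, hgw⟩ := hmem w hw
  refine reflTransGen_of_isPreconnected (D := {v}ᶜ) hWc (fun f hf ↦ ?_)
    (fun f hf x hx y hy hfx hfy ↦ ?_) hf hg huv hwv hfu hgw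
  · by_contra! hzero
    exact (hWU hf).2.2 (eq_single_of_mem_stdSimplex
      (realization_subset_stdSimplex (hWU hf).2.1) hzero)
  · rw [mem_faces_link (by simp [Ne.symm hx, Ne.symm hy]) (insert_nonempty x {y})]
    exact mem_faces_of_forall_ne_zero (hWU hf).2.1 (insert_nonempty _ _) (by
      simpa [hfx, hfy] using (hWU hf).1)

end Realization

end SComplex

namespace SComplex

section Dimension

variable {V : Type} [DecidableEq V] {M : SComplex V} {σ τ : Finset V}

/-- The barycenter of the simplex spanned by `σ`. -/
noncomputable def barycenter (σ : Finset V) (v : V) : ℝ := if v ∈ σ then (#σ : ℝ)⁻¹ else 0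

/-- The affine parametrization of the hyperplane spanned by `σ` through the barycentric coordinates
other than the one at `a`. -/
def hyperplaneParam (σ : Finset V) (a : V) (g : σ.erase a → ℝ) (v : V) : ℝ :=
  if h : v ∈ σ.erase a then g ⟨v, h⟩ else if v = a then 1 - ∑ w, g w else 0

theorem isEmbedding_hyperplaneParam (σ : Finset V) (a : V) :
    IsEmbedding (hyperplaneParam σ a) := by
  refine Function.LeftInverse.isEmbedding (f := fun f v ↦ f v.1) (fun g ↦ ?_) (by fun_prop)
    (continuous_pi fun v ↦ ?_)
  · ext v
    exact dif_pos v.2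
  · unfold hyperplaneParam
    split_ifs <;> fun_prop

variable [Fintype V]

theorem barycenter_mem_cell (hσ : σ.Nonempty) : barycenter σ ∈ cell σ := by
  refine ⟨⟨fun v ↦ ?_, ?_⟩, fun v hv ↦ if_neg hv⟩
  · unfold barycenter
    positivity
  · simp [barycenter, hσ.card_ne_zero]

theorem hyperplaneParam_restrict {a : V} (ha : a ∈ σ) {f : V → ℝ} (hf : f ∈ cell σ) :
    hyperplaneParam σ a (fun v ↦ f v.1) = f := by
  ext v
  unfold hyperplaneParam
  split_ifs with hv hva
  · rfl
  · subst hva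
    rw [univ_eq_attach, sum_attach (σ.erase v) f, ← sum_eq_one_of_mem_cell hf,
      ← add_sum_erase σ f ha, add_sub_cancel_right]
  · exact (hf.2 v fun hvσ ↦ hv (mem_erase.mpr ⟨hva, hvσ⟩)).symm

theorem hyperplaneParam_mem_cell {a : V} (ha : a ∈ σ) {g : σ.erase a → ℝ}
    (hg : ∀ v ∈ σ, 0 < hyperplaneParam σ a g v) : hyperplaneParam σ a g ∈ cell σ := by
  have hzero : ∀ v ∉ σ, hyperplaneParam σ a g v = 0 := fun v hv ↦ by
    rw [hyperplaneParam, dif_neg (fun h ↦ hv (mem_of_mem_erase h)),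
      if_neg (ne_of_mem_of_not_mem ha hv).symm]
  refine ⟨⟨fun v ↦ ?_, ?_⟩, hzero⟩
  · by_cases hv : v ∈ σ
    exacts [(hg v hv).le, (hzero v hv).ge]
  · have hrest : ∑ v ∈ σ.erase a, hyperplaneParam σ a g v = ∑ w, g w := by
      rw [← sum_attach, univ_eq_attach]
      exact sum_congr rfl fun v _ ↦ dif_pos v.2
    rw [← sum_subset (subset_univ σ) fun v _ ↦ hzero v, ← add_sum_erase σ _ ha, hrest]
    simp [hyperplaneParam]

theorem logTrivial_nhdsWithin_of_maximal (hσ : Maximal (· ∈ M.faces) σ) (hcard : 4 ≤ #σ)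
    {p : V → ℝ} (hp : p ∈ M.realization) (hpσ : ∀ v ∈ σ, p v ≠ 0) :
    LogTrivial (𝓝[M.realization \ {p}] p) := by
  have mem_cell : ∀ f ∈ M.realization, (∀ v ∈ σ, f v ≠ 0) → f ∈ cell σ := fun f hf hfσ ↦ by
    obtain ⟨τ, hτ, hfτ⟩ := mem_realization_iff.mp hf
    have hστ : σ ⊆ τ := fun v hv ↦ mem_of_mem_cell hfτ (hfσ v hv)
    rwa [hστ.antisymm (hσ.le_of_ge hτ hστ)]
  obtain ⟨a, ha⟩ := M.nonempty_of_mem σ hσ.prop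
  have hpcell := mem_cell p hp hpσ
  set q : σ.erase a → ℝ := fun v ↦ p v.1
  have hpq : hyperplaneParam σ a q = p := hyperplaneParam_restrict ha hpcell
  let U : Set (V → ℝ) := {f | ∀ v ∈ σ, 0 < f v}
  have hU : IsOpen U := by
    simp only [U, Set.ofPred_forall]
    exact isOpen_biInter_finset fun v _ ↦ isOpen_lt continuous_const (continuous_apply v)
  have hnhds : 𝓝[M.realization \ {p}] p = map (hyperplaneParam σ a) (𝓝[≠] q) := by
    rw [(isEmbedding_hyperplaneParam σ a).map_nhdsWithin_eq,
      Set.image_compl_eq_range_sdiff_image (isEmbedding_hyperplaneParam σ a).injective,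
      Set.image_singleton, hpq]
    refine nhdsWithin_eq_nhdsWithin (s := U)
      (fun v hv ↦ (hpcell.1.1 v).lt_of_ne' (hpσ v hv)) hU ?_
    ext f
    refine and_congr_left fun hfU ↦ and_congr_left fun _ ↦ ⟨fun hf ↦ ?_, ?_⟩
    · exact ⟨_, hyperplaneParam_restrict ha (mem_cell f hf fun v hv ↦ (hfU v hv).ne')⟩
    · rintro ⟨g, rfl⟩
      exact cell_subset_realization hσ.prop (hyperplaneParam_mem_cell ha hfU)
  rw [hnhds, logTrivial_map_iff (isEmbedding_hyperplaneParam σ a)]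
  refine logTrivial_nhdsNE ?_ q
  rw [rank_fun', Fintype.card_coe, card_erase_of_mem ha]
  exact_mod_cast (by omega : 2 < #σ - 1)

theorem card_le_three (hdense : Dense {p : M.realization | ¬ LogTrivial (𝓝[≠] p)})
    (hσ : σ ∈ M.faces) : #σ ≤ 3 := by
  by_contra! hcard
  obtain ⟨τ, hστ, hτ⟩ := M.faces.exists_le_maximal hσ
  let O : Set M.realization := {f | ∀ v ∈ τ, f.1 v ≠ 0}
  have hO : IsOpen O := by
    simp only [O, Set.ofPred_forall]
    exact isOpen_biInter_finset fun v _ ↦ isOpen_ne_fun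
      ((continuous_apply v).comp continuous_subtype_val) continuous_const
  have hne := M.nonempty_of_mem τ hτ.prop
  have hbary : barycenter τ ∈ M.realization :=
    cell_subset_realization hτ.prop (barycenter_mem_cell hne)
  have hOne : O.Nonempty :=
    ⟨⟨barycenter τ, hbary⟩, fun v hv ↦ by simp [barycenter, hv, hne.card_ne_zero]⟩
  obtain ⟨p, hp, hpO⟩ := hdense.inter_open_nonempty O hO hOne
  refine hpO ?_
  rw [← logTrivial_map_iff IsEmbedding.subtypeVal, map_val_nhdsNE]
  exact logTrivial_nhdsWithin_of_maximal hτ (hcard.trans_le (card_le_card hστ)) p.2 hp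

end Dimension

section EdgeNeighbourhood

theorem exists_isLogOn_sub_abs_im_mul_I :
    ∃ L : ℂ → ℂ, IsLogOn L (fun z ↦ z.re - |z.im| * I) {0}ᶜ := by
  have hslit : ∀ z ∈ ({0}ᶜ : Set ℂ), (|z.im| + z.re * I : ℂ) ∈ slitPlane := fun z hz ↦ by
    simp only [mem_slitPlane_iff, add_re, add_im, ofReal_re, ofReal_im, re_ofReal_mul,
      im_ofReal_mul, I_re, I_im, mul_zero, mul_one, add_zero, zero_add, abs_pos]
    by_contra! h
    exact hz (Complex.ext h.2 h.1)
  refine ⟨fun z ↦ log (|z.im| + z.re * I) - log I,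
    (ContinuousOn.clog (by fun_prop) hslit).sub continuousOn_const, fun z hz ↦ ?_⟩
  rw [exp_sub, exp_log (slitPlane_ne_zero (hslit z hz)), exp_log I_ne_zero, div_I]
  linear_combination (-z.re : ℂ) * I_mul_I

variable {V : Type} {a b w w' w'' : V}

/-- The coordinate near the edge `ab` unfolding the triangle `abw` to one side of the edge and every
other triangle through it to the other. -/
noncomputable def edgeCoord (a b w : V) (f : V → ℝ) : ℂ :=
  (f a - f b : ℝ) + (f w - (1 - f a - f b - f w) : ℝ) * I

theorem continuous_edgeCoord (a b w : V) : Continuous (edgeCoord a b w) := by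
  unfold edgeCoord
  fun_prop

variable [DecidableEq V]

/-- The disc formed by the triangles `abw` and `abw'`, parametrized near the midpoint of `ab` so as
to be inverse to `edgeCoord a b w`. -/
noncomputable def edgeDisc (a b w w' : V) (z : ℂ) : V → ℝ :=
  Pi.single a ((1 - |z.im| + z.re) / 2) + Pi.single b ((1 - |z.im| - z.re) / 2) +
    Pi.single w (max z.im 0) + Pi.single w' (max (-z.im) 0)

theorem continuous_edgeDisc : Continuous (edgeDisc a b w w') := by
  have hsingle : ∀ (v : V) (g : ℂ → ℝ), Continuous g →
      Continuous fun z ↦ (Pi.single v (g z) : V → ℝ) := fun v g hg ↦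
    (continuous_single v).comp hg
  unfold edgeDisc
  exact (((hsingle _ _ (by fun_prop)).add (hsingle _ _ (by fun_prop))).add
    (hsingle _ _ (by fun_prop))).add (hsingle _ _ (by fun_prop))

theorem edgeDisc_zero (hab : a ≠ b) : edgeDisc a b w w' 0 = barycenter {a, b} := by
  ext v
  obtain rfl | hva := eq_or_ne v a
  · simp [edgeDisc, barycenter, hab]
  obtain rfl | hvb := eq_or_ne v b
  · simp [edgeDisc, barycenter, hab, hab.symm]
  · simp [edgeDisc, barycenter, hva, hvb]

theorem edgeCoord_edgeDisc (h : [a, b, w, w'].Nodup) (z : ℂ) :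
    edgeCoord a b w (edgeDisc a b w w' z) = z := by
  simp only [List.nodup_cons, List.mem_cons, List.not_mem_nil, or_false, not_or] at h
  obtain ⟨⟨hab, haw, haw'⟩, ⟨hbw, hbw'⟩, hww', -⟩ := h
  apply Complex.ext
  · simp [edgeCoord, edgeDisc, Ne.symm hab, hab, haw, haw', hbw, hbw']
    ring
  · rcases le_total 0 z.im with hz | hz <;>
      simp [edgeCoord, edgeDisc, hab, Ne.symm hab, haw, haw', hbw, hbw', hww', Ne.symm haw,
        Ne.symm hbw, hz, abs_of_nonneg, abs_of_nonpos] <;> ring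

theorem edgeCoord_edgeDisc_of_ne (h : [a, b, w, w', w''].Nodup) (z : ℂ) :
    edgeCoord a b w'' (edgeDisc a b w w' z) = z.re - |z.im| * I := by
  simp only [List.nodup_cons, List.mem_cons, List.not_mem_nil, or_false, not_or] at h
  obtain ⟨⟨hab, haw, haw', haw''⟩, ⟨hbw, hbw', hbw''⟩, ⟨-, hww''⟩, hw'w'', -⟩ := h
  apply Complex.ext
  · simp [edgeCoord, edgeDisc, hab, Ne.symm hab, haw, haw', hbw, hbw']
    ring
  · simp [edgeCoord, edgeDisc, hab, Ne.symm hab, haw, haw', hbw, hbw', Ne.symm haw'',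
      Ne.symm hbw'', Ne.symm hww'', Ne.symm hw'w'']
    ring

variable [Fintype V] {M : SComplex V}

theorem edgeCoord_ne_zero (hcard : ∀ σ ∈ M.faces, #σ ≤ 3) (hw : [a, b, w].Nodup) {f : V → ℝ}
    (hf : f ∈ M.realization) (hfa : f a ≠ 0) (hfb : f b ≠ 0) (hne : f ≠ barycenter {a, b}) :
    edgeCoord a b w f ≠ 0 := by
  simp only [List.nodup_cons, List.mem_cons, List.not_mem_nil, or_false, not_or] at hw
  obtain ⟨⟨hab, haw⟩, hbw, -⟩ := hw
  obtain ⟨σ, hσ, hfσ⟩ := mem_realization_iff.mp hf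
  intro hzero
  have hre : f a - f b = 0 := by simpa [edgeCoord] using congrArg re hzero
  have him : f w - (1 - f a - f b - f w) = 0 := by simpa [edgeCoord] using congrArg im hzero
  have hfw : f w = 0 := by
    by_contra hfw
    have hsub : {a, b, w} ⊆ σ := by
      simp [insert_subset_iff, mem_of_mem_cell hfσ, hfa, hfb, hfw]
    obtain rfl := eq_of_subset_of_card_le hsub (by
      rw [card_eq_three.mpr ⟨a, b, w, hab, haw, hbw, rfl⟩]; exact hcard σ hσ)
    have hsum := sum_eq_one_of_mem_cell hfσ
    rw [sum_insert (by simp [hab, haw]), sum_pair hbw] at hsum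
    exact hfw (by linarith)
  refine hne (funext fun v ↦ ?_)
  by_cases hv : v ∈ ({a, b} : Finset V)
  · rw [barycenter, if_pos hv, card_pair hab]
    obtain rfl | rfl : v = a ∨ v = b := by simpa using hv
    all_goals push_cast; linarith
  · rw [barycenter, if_neg hv]
    have hle := sum_le_univ_sum_of_nonneg (s := insert v {a, b}) hfσ.1.1
    rw [sum_insert hv, sum_pair hab, hfσ.1.2] at hle
    exact le_antisymm (by linarith) (hfσ.1.1 v)

theorem edgeDisc_mem_realization (hw : {a, b, w} ∈ M.faces)
    (hw' : {a, b, w'} ∈ M.faces) {z : ℂ} (hz : ‖z‖ < 1 / 2) :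
    edgeDisc a b w w' z ∈ M.realization := by
  have hre := abs_le.mp ((abs_re_le_norm z).trans hz.le)
  have him := (abs_im_le_norm z).trans hz.le
  have hsimplex : edgeDisc a b w w' z ∈ stdSimplex ℝ V := by
    refine ⟨?_, ?_⟩
    · have : 0 ≤ edgeDisc a b w w' z := by
        refine add_nonneg (add_nonneg (add_nonneg ?_ ?_) ?_) ?_ <;>
          simp only [Pi.single_nonneg, le_max_right] <;> linarith
      exact this
    · simp only [edgeDisc, Pi.add_apply, sum_add_distrib, Fintype.sum_pi_single']
      rcases le_total 0 z.im with h | h <;> simp [h, abs_of_nonneg, abs_of_nonpos] <;> ring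
  rcases le_total 0 z.im with h | h
  · refine cell_subset_realization hw ⟨hsimplex, fun v hv ↦ ?_⟩
    simp only [mem_insert, mem_singleton, not_or] at hv
    simp [edgeDisc, hv, h]
  · refine cell_subset_realization hw' ⟨hsimplex, fun v hv ↦ ?_⟩
    simp only [mem_insert, mem_singleton, not_or] at hv
    simp [edgeDisc, hv, h]

theorem tendsto_edgeDisc (h : [a, b, w, w'].Nodup) (hw : {a, b, w} ∈ M.faces)
    (hw' : {a, b, w'} ∈ M.faces) :
    Tendsto (edgeDisc a b w w') (𝓝[≠] 0)
      (𝓝[M.realization \ {barycenter {a, b}}] (barycenter {a, b})) := by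
  have hzero : edgeDisc a b w w' 0 = barycenter {a, b} := edgeDisc_zero (by aesop)
  refine tendsto_nhdsWithin_iff.mpr
    ⟨(continuous_edgeDisc.tendsto' 0 _ hzero).mono_left nhdsWithin_le_nhds, ?_⟩
  filter_upwards [self_mem_nhdsWithin,
    mem_nhdsWithin_of_mem_nhds (Metric.ball_mem_nhds (0 : ℂ) one_half_pos)] with z hz0 hz
  refine ⟨edgeDisc_mem_realization hw hw' (mem_ball_zero_iff.mp hz), fun hbary ↦ hz0 ?_⟩
  rw [Set.mem_singleton_iff, ← edgeCoord_edgeDisc h z, hbary, ← hzero, edgeCoord_edgeDisc h]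

theorem eq_zero_of_isLogOn_edgeCoord (h : [a, b, w, w', w''].Nodup) (hw : {a, b, w} ∈ M.faces)
    (hw' : {a, b, w'} ∈ M.faces) {W : Set (V → ℝ)}
    (hW : W ∈ 𝓝[M.realization \ {barycenter {a, b}}] (barycenter {a, b})) {m n : ℤ}
    {L : (V → ℝ) → ℂ}
    (hL : IsLogOn L (fun f ↦ edgeCoord a b w f ^ m * edgeCoord a b w'' f ^ n) W) : m = 0 := by
  have h4 : [a, b, w, w'].Nodup := h.sublist (by simp)
  obtain ⟨r, hr, hrW⟩ := Metric.mem_nhdsWithin_iff.mp (tendsto_edgeDisc h4 hw hw' hW)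
  have hsphere : ∀ z ∈ Metric.sphere (0 : ℂ) (r / 2), z ≠ 0 ∧ edgeDisc a b w w' z ∈ W :=
    fun z hz ↦ by
      have hz0 : z ≠ 0 := ne_zero_of_mem_sphere (half_pos hr).ne' ⟨z, hz⟩
      exact ⟨hz0, hrW ⟨Metric.sphere_subset_ball (half_lt_self hr) hz, hz0⟩⟩
  obtain ⟨L', hL'⟩ := exists_isLogOn_sub_abs_im_mul_I
  have hquot := (hL.comp continuous_edgeDisc.continuousOn fun z hz ↦ (hsphere z hz).2).mul
    ((hL'.mono fun z hz ↦ (hsphere z hz).1).zpow (-n))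
  refine eq_zero_of_isLogOn_zpow_sphere (half_pos hr) ⟨hquot.1, fun z hz ↦ ?_⟩
  have hne := hL'.ne_zero (hsphere z hz).1
  rw [hquot.2 z hz]
  simp only [Function.comp_apply, edgeCoord_edgeDisc h4, edgeCoord_edgeDisc_of_ne h]
  rw [mul_assoc, ← zpow_add₀ hne, add_neg_cancel, zpow_zero, mul_one]

theorem card_triangles_le_two (hcard : ∀ σ ∈ M.faces, #σ ≤ 3) {e : Finset V} (he : #e = 2)
    (htame : LogTame (𝓝[M.realization \ {barycenter e}] (barycenter e))) :
    #{τ ∈ M.faces | #τ = 3 ∧ e ⊆ τ} ≤ 2 := by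
  by_contra! hthree
  obtain ⟨a, b, hab, rfl⟩ := card_eq_two.mp he
  obtain ⟨τ₁, τ₂, τ₃, h₁, h₂, h₃, h₁₂, h₁₃, h₂₃⟩ := two_lt_card_iff.mp hthree
  have apex : ∀ τ ∈ M.faces.filter (fun τ ↦ #τ = 3 ∧ {a, b} ⊆ τ),
      ∃ w ∉ ({a, b} : Finset V), insert w {a, b} = τ := fun τ hτ ↦ by
    obtain ⟨-, hτ3, hsub⟩ := Finset.mem_filter.mp hτ
    exact exists_eq_insert_iff.mpr ⟨hsub, by rw [he, hτ3]⟩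
  obtain ⟨⟨w₁, hw₁, rfl⟩, ⟨w₂, hw₂, rfl⟩, ⟨w₃, hw₃, rfl⟩⟩ := And.intro (apex τ₁ h₁)
    (And.intro (apex τ₂ h₂) (apex τ₃ h₃))
  have face : ∀ w, insert w {a, b} ∈ M.faces.filter (fun τ ↦ #τ = 3 ∧ {a, b} ⊆ τ) →
      {a, b, w} ∈ M.faces := fun w hw ↦ by
    have := (Finset.mem_filter.mp hw).1
    rwa [insert_comm, pair_comm w b] at this
  replace h₁₂ : w₁ ≠ w₂ := fun h ↦ h₁₂ (by rw [h])
  replace h₁₃ : w₁ ≠ w₃ := fun h ↦ h₁₃ (by rw [h])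
  replace h₂₃ : w₂ ≠ w₃ := fun h ↦ h₂₃ (by rw [h])
  have hnodup : [a, b, w₁, w₃, w₂].Nodup ∧ [a, b, w₂, w₃, w₁].Nodup := by
    simp_all [eq_comm]
  let U : Set (V → ℝ) := {f | f a ≠ 0 ∧ f b ≠ 0}
  have hU : IsOpen U := (isOpen_ne_fun (continuous_apply a) continuous_const).inter
    (isOpen_ne_fun (continuous_apply b) continuous_const)
  have hbU : barycenter {a, b} ∈ U := by simp [U, barycenter, hab]
  obtain ⟨W, hW, hWU, -, hrank⟩ := htame _
    (Filter.inter_mem self_mem_nhdsWithin (mem_nhdsWithin_of_mem_nhds (hU.mem_nhds hbU)))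
  have hne : ∀ w, [a, b, w].Nodup → ∀ f ∈ W, edgeCoord a b w f ≠ 0 := fun w hw f hf ↦
    have ⟨⟨hfM, hfb⟩, hfU⟩ := hWU hf
    edgeCoord_ne_zero hcard hw hfM hfU.1 hfU.2 hfb
  obtain ⟨m, n, hmn, L, hL⟩ := hrank (edgeCoord a b w₁) (edgeCoord a b w₂)
    (continuous_edgeCoord ..).continuousOn (hne w₁ (hnodup.1.sublist (by simp)))
    (continuous_edgeCoord ..).continuousOn (hne w₂ (hnodup.2.sublist (by simp)))
  have hm := eq_zero_of_isLogOn_edgeCoord hnodup.1 (face w₁ h₁) (face w₃ h₃) hW hL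
  have hn := eq_zero_of_isLogOn_edgeCoord hnodup.2 (face w₂ h₂) (face w₃ h₃) hW
    (m := n) (n := m) (by simpa only [mul_comm] using hL)
  tauto

end EdgeNeighbourhood

end SComplex

theorem isBridge_of_ncard_neighborSet_le_two {α : Type*} [Finite α] {G : SimpleGraph α}
    (hdeg : ∀ v, (G.neighborSet v).ncard ≤ 2) {s t t' : α} (hs : (G.neighborSet s).ncard ≤ 1)
    (hts : G.Reachable t s) (htt' : G.Adj t t') : G.IsBridge s(t, t') := by
  classical
  rw [SimpleGraph.isBridge_iff_forall_cycle_notMem (by exact htt')]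
  intro u p hp hmem
  have hclosed : ∀ v ∈ p.support, G.neighborSet v = p.toSubgraph.neighborSet v := fun v hv ↦
    (Set.eq_of_subset_of_ncard_le (p.toSubgraph.neighborSet_subset v)
      ((hdeg v).trans_eq (hp.ncard_neighborSet_toSubgraph_eq_two hv).symm)).symm
  have hsupp : ∀ v, G.Reachable t v → v ∈ p.support := fun v htv ↦ by
    induction (SimpleGraph.reachable_iff_reflTransGen t v).mp htv with
    | refl => exact p.fst_mem_support_of_mem_edges hmem
    | tail ht hvw ih =>
      have hvw' := (hclosed _ (ih ((SimpleGraph.reachable_iff_reflTransGen _ _).mpr ht))).subset hvw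
      exact p.mem_verts_toSubgraph.mp (p.toSubgraph.edge_vert hvw'.symm)
  have htwo := hp.ncard_neighborSet_toSubgraph_eq_two (hsupp s hts)
  rw [← hclosed s (hsupp s hts)] at htwo
  omega

namespace SComplex

variable {V : Type} [DecidableEq V] {M : SComplex V} {T T' T'' e : Finset V} {x y : V}

/-- The two-dimensional faces. -/
def triangles (M : SComplex V) : Finset (Finset V) := {τ ∈ M.faces | #τ = 3}

theorem mem_triangles : T ∈ M.triangles ↔ T ∈ M.faces ∧ #T = 3 := Finset.mem_filter

/-- The dual graph of a 2-complex, joining triangles that share an edge. -/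
def dualGraph (M : SComplex V) : SimpleGraph (Finset V) where
  Adj T T' := T ∈ M.triangles ∧ T' ∈ M.triangles ∧ #(T ∩ T') = 2
  symm := ⟨fun T T' ⟨hT, hT', h⟩ ↦ ⟨hT', hT, inter_comm T T' ▸ h⟩⟩
  loopless := ⟨fun T ⟨hT, _, h⟩ ↦ by
    rw [inter_self, (mem_triangles.mp hT).2] at h
    omega⟩

/-- The part of the dual graph formed by the triangles around the vertex `x`. -/
def starGraph (M : SComplex V) (x : V) : SimpleGraph (Finset V) where
  Adj T T' := M.dualGraph.Adj T T' ∧ x ∈ T ∩ T'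
  symm := ⟨fun T T' ⟨h, hx⟩ ↦ ⟨h.symm, inter_comm T T' ▸ hx⟩⟩
  loopless := ⟨fun _ h ↦ h.1.ne rfl⟩

/-- The combinatorial properties of a triangulated connected surface with boundary that we use. -/
structure IsSurface (M : SComplex V) : Prop where
  connected : M.Connected
  connected_link : ∀ v, (M.link {v}).Connected
  card_le_three : ∀ σ ∈ M.faces, #σ ≤ 3
  card_triangles_le_two : ∀ e ∈ M.faces, #e = 2 → #{τ ∈ M.faces | #τ = 3 ∧ e ⊆ τ} ≤ 2

theorem eq_or_dualGraph_adj (hT : T ∈ M.triangles) (hT' : T' ∈ M.triangles) (hxy : x ≠ y)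
    (hx : x ∈ T ∩ T') (hy : y ∈ T ∩ T') : T = T' ∨ M.dualGraph.Adj T T' := by
  by_contra! h
  have hlt : #(T ∩ T') < 3 := (mem_triangles.mp hT).2 ▸ card_lt_card
    (inter_subset_left.ssubset_of_ne fun hsub ↦ h.1 <| eq_of_subset_of_card_le
      (inter_eq_left.mp hsub) (by simp [(mem_triangles.mp hT).2, (mem_triangles.mp hT').2]))
  have hle : 1 < #(T ∩ T') := one_lt_card.mpr ⟨x, hx, y, hy, hxy⟩
  exact h.2 ⟨hT, hT', by omega⟩

theorem reachable_starGraph_of_mem_of_mem (hT : T ∈ M.triangles) (hT' : T' ∈ M.triangles)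
    (hxy : x ≠ y) (hx : x ∈ T ∩ T') (hy : y ∈ T ∩ T') : (M.starGraph x).Reachable T T' := by
  obtain rfl | hadj := eq_or_dualGraph_adj hT hT' hxy hx hy
  exacts [.rfl, SimpleGraph.Adj.reachable ⟨hadj, hx⟩]

theorem starGraph_le_dualGraph : M.starGraph x ≤ M.dualGraph := fun _ _ h ↦ h.1

namespace IsSurface

theorem eq_of_subset_of_ne (hM : M.IsSurface) (he : #e = 2) (hT : T ∈ M.triangles) (heT : e ⊆ T)
    (hT' : T' ∈ M.triangles) (heT' : e ⊆ T') (hT'' : T'' ∈ M.triangles) (heT'' : e ⊆ T'')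
    (h : T ≠ T') (h' : T ≠ T'') : T' = T'' := by
  by_contra hne
  have heM : e ∈ M.faces :=
    M.down_closed T (mem_triangles.mp hT).1 e heT (card_pos.mp (he ▸ two_pos))
  have hmem : ∀ τ ∈ M.triangles, e ⊆ τ → τ ∈ M.faces.filter (fun τ ↦ #τ = 3 ∧ e ⊆ τ) :=
    fun τ hτ heτ ↦ Finset.mem_filter.mpr
      ⟨(mem_triangles.mp hτ).1, (mem_triangles.mp hτ).2, heτ⟩
  exact (hM.card_triangles_le_two e heM he).not_gt <| two_lt_card_iff.mpr
    ⟨T, T', T'', hmem T hT heT, hmem T' hT' heT', hmem T'' hT'' heT'', h, h', hne⟩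

theorem eq_of_dualGraph_adj (hM : M.IsSurface) (h : M.dualGraph.Adj T T')
    (h' : M.dualGraph.Adj T T'') (heq : T ∩ T' = T ∩ T'') : T' = T'' :=
  hM.eq_of_subset_of_ne h.2.2 h.1 inter_subset_left h.2.1 inter_subset_right h'.2.1
    (heq ▸ inter_subset_right) h.ne h'.ne

theorem exists_reachable_starGraph (hM : M.IsSurface) (hT : T ∈ M.triangles) (hx : x ∈ T)
    (hxy : x ≠ y) (hy : {x, y} ∈ M.faces) :
    ∃ T' ∈ M.triangles, x ∈ T' ∧ y ∈ T' ∧ (M.starGraph x).Reachable T T' := by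
  obtain ⟨hTM, hcard⟩ := mem_triangles.mp hT
  obtain ⟨z, hz, hzx⟩ := exists_mem_ne (by omega : 1 < #T) x
  have mem_link : ∀ z ≠ x, {x, z} ∈ M.faces → z ∈ (M.link {x}).vertices := fun z hzx hz ↦
    mem_vertices.mpr ((mem_faces_link (by simpa using hzx.symm) (singleton_nonempty z)).mpr hz)
  have hpath := hM.connected_link x z
    (mem_link z hzx (M.down_closed T hTM _ (by simp [insert_subset_iff, hx, hz]) ⟨x, by simp⟩))
    y (mem_link y hxy.symm hy)
  induction hpath with
  | refl => exact ⟨T, hT, hx, hz, .rfl⟩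
  | @tail a b _ hab ih =>
    have hxab := notMem_of_mem_faces_link hab
    have hface := (mem_faces_link hxab ⟨a, by simp⟩).mp hab
    have hxa : x ≠ a := fun h ↦ hxab (by simp [h])
    obtain ⟨T', hT', hxT', haT', hreach⟩ :=
      ih hxa (M.down_closed _ hface _ (by simp [insert_subset_iff]) ⟨x, by simp⟩)
    obtain rfl | hab := eq_or_ne a b
    · exact ⟨T', hT', hxT', haT', hreach⟩
    have htri : {x, a, b} ∈ M.triangles :=
      mem_triangles.mpr ⟨hface, card_eq_three.mpr ⟨x, a, b, hxa, hxy, hab, rfl⟩⟩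
    exact ⟨_, htri, by simp, by simp, hreach.trans <|
      reachable_starGraph_of_mem_of_mem hT' htri hxa (by simp [hxT']) (by simp [haT'])⟩

theorem reachable_starGraph (hM : M.IsSurface) (hT : T ∈ M.triangles) (hT' : T' ∈ M.triangles)
    (hx : x ∈ T) (hx' : x ∈ T') : (M.starGraph x).Reachable T T' := by
  obtain ⟨hTM', hcard⟩ := mem_triangles.mp hT'
  obtain ⟨y, hy, hyx⟩ := exists_mem_ne (by omega : 1 < #T') x
  obtain ⟨T'', hT'', hxT'', hyT'', hreach⟩ := hM.exists_reachable_starGraph hT hx hyx.symm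
    (M.down_closed T' hTM' _ (by simp [insert_subset_iff, hx', hy]) ⟨x, by simp⟩)
  exact hreach.trans <| reachable_starGraph_of_mem_of_mem hT'' hT' hyx.symm
    (by simp [hxT'', hx']) (by simp [hyT'', hy])

theorem ncard_neighborSet_starGraph_le (hM : M.IsSurface) {B : Finset V}
    (hB : ∀ T', (M.starGraph x).Adj T T' → ∃ y ∈ B, T ∩ T' = {x, y}) :
    ((M.starGraph x).neighborSet T).ncard ≤ #B := by
  calc ((M.starGraph x).neighborSet T).ncard
      ≤ (B.image fun y ↦ ({x, y} : Finset V) : Set (Finset V)).ncard := by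
        refine Set.ncard_le_ncard_of_injOn (T ∩ ·) (fun T' hT' ↦ ?_)
          (fun T' hT' T'' hT'' h ↦ hM.eq_of_dualGraph_adj hT'.1 hT''.1 h) (Finset.finite_toSet _)
        obtain ⟨y, hy, hTT'⟩ := hB T' hT'
        exact mem_coe.mpr (mem_image.mpr ⟨y, hy, hTT'.symm⟩)
    _ ≤ #B := by
      rw [Set.ncard_coe_finset]
      exact card_image_le

theorem exists_inter_eq_pair (h : (M.starGraph x).Adj T T') : ∃ y ∈ T.erase x, T ∩ T' = {x, y} := by
  obtain ⟨y, hy⟩ := card_eq_one.mp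
    (show #((T ∩ T').erase x) = 1 by rw [card_erase_of_mem h.2, h.1.2.2])
  have hy' : y ∈ (T ∩ T').erase x := hy ▸ mem_singleton_self y
  refine ⟨y, erase_subset_erase x inter_subset_left hy', ?_⟩
  rw [← insert_erase h.2, hy]

theorem isBridge_starGraph [Finite V] (hM : M.IsSurface) (hbd : M.NoInteriorVertices)
    (h : (M.starGraph x).Adj T T') : (M.starGraph x).IsBridge s(T, T') := by
  have hxT : x ∈ T := (mem_inter.mp h.2).1
  obtain ⟨e, -, hxe, he, hone⟩ :=
    hbd x (mem_vertices.mpr (singleton_mem_faces (mem_triangles.mp h.1.1).1 hxT))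
  obtain ⟨S, hS⟩ := card_eq_one.mp hone
  have hunique : ∀ τ ∈ M.triangles, e ⊆ τ → τ = S := fun τ hτ heτ ↦ mem_singleton.mp <|
    hS ▸ Finset.mem_filter.mpr ⟨(mem_triangles.mp hτ).1, (mem_triangles.mp hτ).2, heτ⟩
  obtain ⟨hSM, hS3, heS⟩ := Finset.mem_filter.mp (hS.symm ▸ mem_singleton_self S)
  have hST : S ∈ M.triangles := mem_triangles.mpr ⟨hSM, hS3⟩
  obtain ⟨y, hyx, rfl⟩ : ∃ y, y ≠ x ∧ e = {x, y} := by
    obtain ⟨y, hy, hyx⟩ := exists_mem_ne (by omega : 1 < #e) x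
    exact ⟨y, hyx, (eq_of_subset_of_card_le (by simp [insert_subset_iff, hxe, hy])
      (by rw [he, card_pair hyx.symm])).symm⟩
  refine isBridge_of_ncard_neighborSet_le_two (fun T ↦ ?_) (s := S) ?_
    (hM.reachable_starGraph h.1.1 hST hxT (heS (by simp))) h
  · by_cases hT : T ∈ M.triangles ∧ x ∈ T
    · refine (hM.ncard_neighborSet_starGraph_le fun _ ↦ exists_inter_eq_pair).trans_eq ?_
      rw [card_erase_of_mem hT.2, (mem_triangles.mp hT.1).2]
    · have : (M.starGraph x).neighborSet T = ∅ := Set.eq_empty_of_forall_notMem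
        fun T' hT' ↦ hT ⟨hT'.1.1, (mem_inter.mp hT'.2).1⟩
      simp [this]
  · refine (hM.ncard_neighborSet_starGraph_le (B := (S.erase x).erase y) fun T' hT' ↦ ?_).trans ?_
    · obtain ⟨z, hz, hSz⟩ := exists_inter_eq_pair hT'
      refine ⟨z, mem_erase.mpr ⟨?_, hz⟩, hSz⟩
      rintro rfl
      exact hT'.1.ne' (hunique T' hT'.1.2.1 (hSz ▸ inter_subset_right))
    · rw [card_erase_of_mem (mem_erase.mpr ⟨hyx, heS (by simp)⟩),
        card_erase_of_mem (heS (by simp)), hS3]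

theorem pure (hM : M.IsSurface) (hbd : M.NoInteriorVertices) : M.Pure 2 := by
  have hvertex : ∀ x, {x} ∈ M.faces → ∃ T ∈ M.triangles, x ∈ T := fun x hx ↦ by
    obtain ⟨e, -, hxe, -, hone⟩ := hbd x (mem_vertices.mpr hx)
    obtain ⟨T, hT⟩ := card_pos.mp (hone ▸ one_pos)
    obtain ⟨hTM, hT3, heT⟩ := Finset.mem_filter.mp hT
    exact ⟨T, mem_triangles.mpr ⟨hTM, hT3⟩, heT hxe⟩
  suffices ∀ σ ∈ M.faces, ∃ T ∈ M.triangles, σ ⊆ T from fun σ hσ ↦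
    have ⟨T, hT, hσT⟩ := this σ hσ
    ⟨T, (mem_triangles.mp hT).1, hσT, (mem_triangles.mp hT).2⟩
  intro σ hσ
  obtain ⟨x, hx⟩ := M.nonempty_of_mem σ hσ
  obtain ⟨T, hT, hxT⟩ := hvertex x (singleton_mem_faces hσ hx)
  have h1 := card_pos.mpr ⟨x, hx⟩
  have h3 := hM.card_le_three σ hσ
  obtain h | h | h : #σ = 1 ∨ #σ = 2 ∨ #σ = 3 := by omega
  · obtain ⟨z, rfl⟩ := card_eq_one.mp h
    exact ⟨T, hT, by simpa [mem_singleton.mp hx] using hxT⟩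
  · obtain ⟨y, hy, hyx⟩ := exists_mem_ne (by omega : 1 < #σ) x
    have hσxy : {x, y} = σ := eq_of_subset_of_card_le (by simp [insert_subset_iff, hx, hy])
      (by rw [h, card_pair hyx.symm])
    obtain ⟨T', hT', hxT', hyT', -⟩ :=
      hM.exists_reachable_starGraph hT hxT hyx.symm (hσxy ▸ hσ)
    exact ⟨T', hT', by simp [← hσxy, insert_subset_iff, hxT', hyT']⟩
  · exact ⟨σ, mem_triangles.mpr ⟨hσ, h⟩, Subset.rfl⟩

theorem reachable_dualGraph (hM : M.IsSurface) (hbd : M.NoInteriorVertices) (hT : T ∈ M.triangles)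
    (hT' : T' ∈ M.triangles) : M.dualGraph.Reachable T T' := by
  have mono {x T T'} (h : (M.starGraph x).Reachable T T') : M.dualGraph.Reachable T T' :=
    h.mono starGraph_le_dualGraph
  have vertex : ∀ T ∈ M.triangles, ∃ x ∈ T, x ∈ M.vertices := fun T hT ↦ by
    obtain ⟨hTM, -⟩ := mem_triangles.mp hT
    obtain ⟨x, hx⟩ := M.nonempty_of_mem T hTM
    exact ⟨x, hx, mem_vertices.mpr (singleton_mem_faces hTM hx)⟩
  obtain ⟨x, hx, hxM⟩ := vertex T hT
  obtain ⟨y, hy, hyM⟩ := vertex T' hT'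
  suffices ∃ S ∈ M.triangles, y ∈ S ∧ M.dualGraph.Reachable T S by
    obtain ⟨S, hS, hyS, hreach⟩ := this
    exact hreach.trans (mono (hM.reachable_starGraph hS hT' hyS hy))
  clear hy
  induction hM.connected x hxM y hyM with
  | refl => exact ⟨T, hT, hx, .rfl⟩
  | @tail a b _ hab ih =>
    have haM : a ∈ M.vertices := mem_vertices.mpr (singleton_mem_faces hab (by simp))
    obtain ⟨S, hS, haS, hreach⟩ := ih haM
    obtain ⟨S', hSM', hsub, hS3'⟩ := hM.pure hbd _ hab
    have hS' : S' ∈ M.triangles := mem_triangles.mpr ⟨hSM', hS3'⟩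
    exact ⟨S', hS', hsub (by simp),
      hreach.trans (mono (hM.reachable_starGraph hS hS' haS (hsub (by simp))))⟩

end IsSurface

end SComplex

theorem IsBandLike.logRankLeOne {X : Type*} [TopologicalSpace X] {S : Set X} (hS : IsBandLike S) :
    LogRankLeOne S := by
  simpa using (logRankLeOne_image_iff IsEmbedding.subtypeVal).mpr hS.logRankLeOne_univ

theorem IsBandLike.not_hasLogs {X : Type*} [TopologicalSpace X] {S : Set X} (hS : IsBandLike S) :
    ¬ HasLogs S := fun h ↦
  hS.not_hasLogs_univ ((hasLogs_image_iff IsEmbedding.subtypeVal).mp (by simpa))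

namespace SComplex

theorem isSurface_of_isBandLike {V : Type} [DecidableEq V] [Fintype V] {M : SComplex V}
    (h : IsBandLike M.realization) : M.IsSurface where
  connected := connected_of_isPreconnected (isPreconnected_iff_preconnectedSpace.mpr
    ⟨h.isPreconnected_univ⟩)
  connected_link v a ha b hb := by
    have haM := mem_vertices.mp ha
    have hv : {v} ∈ M.faces := singleton_mem_faces
      ((mem_faces_link (notMem_of_mem_faces_link haM) (singleton_nonempty a)).mp haM) (by simp)
    exact connected_link (h.logTame_nhdsWithin
      (cell_subset_realization hv (single_mem_cell (by simp)))) a ha b hb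
  card_le_three _ := card_le_three h.dense_not_logTrivial
  card_triangles_le_two e he he2 :=
    card_triangles_le_two (fun _ ↦ card_le_three h.dense_not_logTrivial) he2
      (h.logTame_nhdsWithin
        (cell_subset_realization he (barycenter_mem_cell (M.nonempty_of_mem e he))))

section Potential

variable {V : Type} [Fintype V] {ψ ψ' : Finset V → V → ℤ} {T T' : Finset V} {x : V}

/-- The logarithm `2πi ψ` on the triangle `T` of the circle-valued function defined by a coherent
`ψ`. -/
noncomputable def localLog (ψ : Finset V → V → ℤ) (T : Finset V) (f : V → ℝ) : ℂ :=
  (∑ x, f x * ψ T x : ℂ) * (2 * Real.pi * I)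

theorem continuous_localLog : Continuous (localLog ψ T) := by
  unfold localLog
  fun_prop

variable [DecidableEq V] {M : SComplex V}

/-- An affine function on each triangle, given by its vertex values `ψ T x`, such that on common
faces of two triangles the two affine functions differ by a constant. -/
def IsCoherent (M : SComplex V) (ψ : Finset V → V → ℤ) : Prop :=
  ∀ T ∈ M.triangles, ∀ T' ∈ M.triangles, ∀ x ∈ T ∩ T', ∀ y ∈ T ∩ T',
    ψ T x - ψ T' x = ψ T y - ψ T' y

theorem iUnion_cell_triangles (hpure : M.Pure 2) : ⋃ T : M.triangles, cell T.1 = M.realization := by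
  ext f
  simp only [Set.mem_iUnion, mem_realization_iff]
  constructor
  · rintro ⟨T, hf⟩
    exact ⟨T, (mem_triangles.mp T.2).1, hf⟩
  · rintro ⟨σ, hσ, hf⟩
    obtain ⟨T, hT, hσT, hT3⟩ := hpure σ hσ
    exact ⟨⟨T, mem_triangles.mpr ⟨hT, hT3⟩⟩, cell_mono hσT hf⟩

theorem localLog_single : localLog ψ T (Pi.single x 1) = ψ T x * (2 * Real.pi * I) := by
  simp [localLog, Pi.single_apply, apply_ite]

theorem IsCoherent.exp_localLog_eq (hψ : M.IsCoherent ψ) (hT : T ∈ M.triangles)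
    (hT' : T' ∈ M.triangles) {f : V → ℝ} (hf : f ∈ cell T) (hf' : f ∈ cell T') :
    exp (localLog ψ T f) = exp (localLog ψ T' f) := by
  have hmem : ∀ x, f x ≠ 0 → x ∈ T ∩ T' := fun x hx ↦
    mem_inter.mpr ⟨mem_of_mem_cell hf hx, mem_of_mem_cell hf' hx⟩
  obtain ⟨x, hx⟩ := exists_ne_zero_of_mem_stdSimplex hf.1
  refine exp_eq_exp_iff_exists_int.mpr ⟨ψ T x - ψ T' x, ?_⟩
  have hsum : ∑ y, f y * ψ T y = ∑ y, f y * ψ T' y + (ψ T x - ψ T' x : ℤ) := by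
    rw [← one_mul ((ψ T x - ψ T' x : ℤ) : ℝ), ← hf.1.2, sum_mul, ← sum_add_distrib]
    refine sum_congr rfl fun y _ ↦ ?_
    by_cases hy : f y = 0
    · simp [hy]
    · rw [hψ T hT T' hT' x (hmem x hx) y (hmem y hy)]
      push_cast
      ring
  rw [localLog, localLog, ← add_mul]
  exact_mod_cast congrArg (fun r : ℝ ↦ (r : ℂ) * (2 * Real.pi * I)) hsum

theorem IsCoherent.exists_isLogOn (hψ : M.IsCoherent ψ) (hpure : M.Pure 2) :
    ∃ g : (V → ℝ) → ℂ, ContinuousOn g M.realization ∧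
      ∀ T ∈ M.triangles, IsLogOn (localLog ψ T) g (cell T) := by
  classical
  let g : (V → ℝ) → ℂ := fun f ↦
    if h : ∃ T : M.triangles, f ∈ cell T.1 then exp (localLog ψ h.choose f) else 0
  have hg : ∀ T ∈ M.triangles, ∀ f ∈ cell T, exp (localLog ψ T f) = g f := fun T hT f hf ↦ by
    have h : ∃ T : M.triangles, f ∈ cell T.1 := ⟨⟨T, hT⟩, hf⟩
    exact (hψ.exp_localLog_eq hT h.choose.2 hf h.choose_spec).trans (by simp only [g, dif_pos h])
  refine ⟨g, ?_, fun T hT ↦ ⟨continuous_localLog.continuousOn, hg T hT⟩⟩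
  rw [← iUnion_cell_triangles hpure]
  exact (locallyFinite_of_finite _).continuousOn_iUnion (fun T ↦ isClosed_cell _) fun T ↦
    (continuous_exp.comp continuous_localLog).continuousOn.congr fun f hf ↦ (hg T T.2 f hf).symm

theorem exists_potential (hpure : M.Pure 2) (hrank : LogRankLeOne M.realization)
    (hψ : M.IsCoherent ψ) (hψ' : M.IsCoherent ψ') :
    ∃ m n : ℤ, (m ≠ 0 ∨ n ≠ 0) ∧ ∃ K : Finset V → ℤ, ∀ T ∈ M.triangles, ∀ T' ∈ M.triangles,
      ∀ x ∈ T ∩ T', K T + m * ψ T x + n * ψ' T x = K T' + m * ψ T' x + n * ψ' T' x := by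
  obtain ⟨g, hg, hgψ⟩ := hψ.exists_isLogOn hpure
  obtain ⟨g', hg', hgψ'⟩ := hψ'.exists_isLogOn hpure
  have ne_zero : ∀ {g : (V → ℝ) → ℂ} {ψ : Finset V → V → ℤ},
      (∀ T ∈ M.triangles, IsLogOn (localLog ψ T) g (cell T)) → ∀ f ∈ M.realization, g f ≠ 0 := by
    intro g ψ h f hf
    obtain ⟨T, hfT⟩ := Set.mem_iUnion.mp ((iUnion_cell_triangles hpure).symm ▸ hf)
    exact (h T T.2).ne_zero hfT
  obtain ⟨m, n, hmn, L, hL⟩ := hrank g g' hg (ne_zero hgψ) hg' (ne_zero hgψ')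
  have hK : ∀ T ∈ M.triangles, ∃ k : ℤ, ∀ f ∈ cell T,
      L f - (m * localLog ψ T f + n * localLog ψ' T f) = k * (2 * Real.pi * I) := fun T hT ↦
    (hL.mono (cell_subset_realization (mem_triangles.mp hT).1)).exists_sub_eq
      (((hgψ T hT).zpow m).mul ((hgψ' T hT).zpow n)) (convex_cell T).isPreconnected
  choose! K hK using hK
  refine ⟨m, n, hmn, K, fun T hT T' hT' x hx ↦ ?_⟩
  have hx := mem_inter.mp hx
  have h := hK T hT _ (single_mem_cell hx.1)
  have h' := hK T' hT' _ (single_mem_cell hx.2)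
  rw [localLog_single, localLog_single] at h h'
  have hpi : (2 * Real.pi * I : ℂ) ≠ 0 := two_pi_I_ne_zero
  have := mul_right_cancel₀ hpi
    (show (K T + m * ψ T x + n * ψ' T x : ℂ) * (2 * Real.pi * I) =
      (K T' + m * ψ T' x + n * ψ' T' x) * (2 * Real.pi * I) by linear_combination h' - h)
  exact_mod_cast this

end Potential

section Crossing

variable {V : Type} [DecidableEq V] {M : SComplex V} {T T' T₁ T₂ T₁' T₂' : Finset V} {x : V}

open scoped Classical in
/-- The side of the edge `T₁ ∩ T₂` near the vertex `x` on which the triangle `T` lies: `1` on the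
side of `T₁`, and `0` on the side of `T₂` or when `x` is not an endpoint. As a coherent family it
defines the circle-valued function winding once across the edge. -/
noncomputable def side (M : SComplex V) (T₁ T₂ T : Finset V) (x : V) : ℤ :=
  if x ∈ T₁ ∩ T₂ ∧ ((M.starGraph x).deleteEdges {s(T₁, T₂)}).Reachable T₁ T then 1 else 0

theorem side_left (hx : x ∈ T₁ ∩ T₂) : M.side T₁ T₂ T₁ x = 1 := if_pos ⟨hx, .rfl⟩

theorem side_eq_of_adj (h : M.dualGraph.Adj T T') (hx : x ∈ T ∩ T') (hne : s(T, T') ≠ s(T₁, T₂)) :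
    M.side T₁ T₂ T x = M.side T₁ T₂ T' x := by
  have hadj : ((M.starGraph x).deleteEdges {s(T₁, T₂)}).Adj T T' :=
    SimpleGraph.deleteEdges_adj.mpr ⟨⟨h, hx⟩, by simpa using hne⟩
  classical
  exact if_congr (and_congr_right fun _ ↦
    ⟨fun h ↦ h.trans hadj.reachable, fun h ↦ h.trans hadj.symm.reachable⟩) rfl rfl

namespace IsSurface

theorem side_right [Finite V] (hM : M.IsSurface) (hbd : M.NoInteriorVertices)
    (h : M.dualGraph.Adj T₁ T₂) (hx : x ∈ T₁ ∩ T₂) : M.side T₁ T₂ T₂ x = 0 :=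
  if_neg fun h' ↦ SimpleGraph.isBridge_iff.mp (hM.isBridge_starGraph hbd ⟨h, hx⟩) h'.2

theorem isCoherent_side [Finite V] (hM : M.IsSurface) (hbd : M.NoInteriorVertices)
    (h : M.dualGraph.Adj T₁ T₂) : M.IsCoherent (M.side T₁ T₂) := by
  intro T hT T' hT' x hx y hy
  obtain rfl | hxy := eq_or_ne x y
  · rfl
  obtain rfl | hadj := eq_or_dualGraph_adj hT hT' hxy hx hy
  · simp only [sub_self]
  by_cases heq : s(T, T') = s(T₁, T₂)
  · obtain ⟨rfl, rfl⟩ | ⟨rfl, rfl⟩ := Sym2.eq_iff.mp heq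
    · simp only [side_left hx, side_left hy, hM.side_right hbd h hx, hM.side_right hbd h hy]
    · rw [inter_comm] at hx hy
      simp only [side_left hx, side_left hy, hM.side_right hbd h hx, hM.side_right hbd h hy]
  · rw [side_eq_of_adj hadj hx heq, side_eq_of_adj hadj hy heq, sub_self, sub_self]

theorem not_reachable_deleteEdges_pair [Fintype V] (hM : M.IsSurface) (hbd : M.NoInteriorVertices)
    (hrank : LogRankLeOne M.realization) (h : M.dualGraph.Adj T₁ T₂) (h' : M.dualGraph.Adj T₁' T₂')
    (hne : s(T₁, T₂) ≠ s(T₁', T₂'))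
    (hreach : (M.dualGraph.deleteEdges {s(T₁, T₂), s(T₁', T₂')}).Reachable T₁ T₂) :
    ¬ (M.dualGraph.deleteEdges {s(T₁, T₂), s(T₁', T₂')}).Reachable T₁' T₂' := by
  intro hreach'
  obtain ⟨m, n, hmn, K, hK⟩ := exists_potential (hM.pure hbd) hrank (hM.isCoherent_side hbd h)
    (hM.isCoherent_side hbd h')
  have inter_nonempty : ∀ {T T'}, M.dualGraph.Adj T T' → ∃ x, x ∈ T ∩ T' := fun h ↦
    card_pos.mp (h.2.2 ▸ two_pos)
  have hconst : ∀ T T', (M.dualGraph.deleteEdges {s(T₁, T₂), s(T₁', T₂')}).Reachable T T' →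
      K T = K T' := fun T T' hTT' ↦ by
    refine (SimpleGraph.reachable_iff_reflTransGen T T').mp hTT' |>.rec rfl
      fun {S S'} _ hSS' ih ↦ ih.trans ?_
    obtain ⟨hadj, hnotMem⟩ := SimpleGraph.deleteEdges_adj.mp hSS'
    simp only [Set.mem_insert_iff, Set.mem_singleton_iff, not_or] at hnotMem
    obtain ⟨x, hx⟩ := inter_nonempty hadj
    have := hK S hadj.1 S' hadj.2.1 x hx
    rw [side_eq_of_adj hadj hx hnotMem.1, side_eq_of_adj hadj hx hnotMem.2] at this
    linarith
  obtain ⟨x, hx⟩ := inter_nonempty h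
  obtain ⟨x', hx'⟩ := inter_nonempty h'
  have hm := hK T₁ h.1 T₂ h.2.1 x hx
  have hn := hK T₁' h'.1 T₂' h'.2.1 x' hx'
  rw [hconst _ _ hreach, side_left hx, hM.side_right hbd h hx, side_eq_of_adj h hx hne] at hm
  rw [hconst _ _ hreach', side_left hx', hM.side_right hbd h' hx',
    side_eq_of_adj h' hx' hne.symm] at hn
  omega

end IsSurface

end Crossing

end SComplex

section Cut

variable {α : Type*} {G : SimpleGraph α} {S : Set α} {s t : α}

theorem connected_induce_of_forall_adj_notMem (hs : s ∈ S) (ht : t ∉ S)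
    (hcross : ∀ x ∈ S, ∀ y ∉ S, G.Adj x y → x = s) (hreach : ∀ x ∈ S, G.Reachable x t) :
    (G.induce S).Connected := by
  have hwalk : ∀ {x y : α}, G.Walk x y → ∀ hx : x ∈ S, y ∉ S →
      (G.induce S).Reachable ⟨x, hx⟩ ⟨s, hs⟩ := by
    intro x y p hx hy
    induction p with
    | nil => exact absurd hx hy
    | @cons x z y hxz _ ih =>
      by_cases hz : z ∈ S
      · exact .trans (SimpleGraph.Adj.reachable (by exact hxz)) (ih hz hy)
      · obtain rfl := hcross x hx z hz hxz
        rfl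
  exact (SimpleGraph.connected_iff_exists_forall_reachable _).mpr
    ⟨⟨s, hs⟩, fun ⟨x, hx⟩ ↦ have ⟨p⟩ := hreach x hx; (hwalk p hx ht).symm⟩

theorem not_isAcyclic_induce [Finite α] (hs : s ∈ S) (ht : t ∉ S) (hst : G.Adj s t)
    (hcross : ∀ x ∈ S, ∀ y ∉ S, G.Adj x y → x = s ∧ y = t) (hreach : ∀ x ∈ S, G.Reachable x t)
    (hleaf : ∀ x, ¬ ∃! y, G.Adj x y) : ¬ (G.induce S).IsAcyclic := by
  classical
  have := Fintype.ofFinite α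
  intro hacyc
  obtain ⟨u, hsu, hut⟩ : ∃ u, G.Adj s u ∧ u ≠ t := by
    by_contra! h
    exact hleaf s ⟨t, hst, h⟩
  have hu : u ∈ S := by_contra fun hu ↦ hut (hcross s hs u hu hsu).2
  have : Nontrivial S := ⟨⟨s, hs⟩, ⟨u, hu⟩, fun h ↦ hsu.ne (congrArg Subtype.val h)⟩
  have hconn := connected_induce_of_forall_adj_notMem hs ht
    (fun x hx y hy h ↦ (hcross x hx y hy h).1) hreach
  obtain ⟨x, hxs, hx⟩ : ∃ x : S, x.1 ≠ s ∧ (G.induce S).degree x = 1 := by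
    obtain ⟨x, y, hxy, hx, hy⟩ := SimpleGraph.IsTree.exists_ne_and_degree_eq_one ⟨hconn, hacyc⟩
    by_cases hxs : x.1 = s
    · exact ⟨y, fun hys ↦ hxy (Subtype.ext (hxs.trans hys.symm)), hy⟩
    · exact ⟨x, hxs, hx⟩
  obtain ⟨y, hxy, hunique⟩ := SimpleGraph.degree_eq_one_iff_existsUnique_adj.mp hx
  refine hleaf x ⟨y, hxy, fun z hz ↦ ?_⟩
  have hzS : z ∈ S := by_contra fun hzS ↦ hxs (hcross x x.2 z hzS hz).1
  exact congrArg Subtype.val (hunique ⟨z, hzS⟩ hz)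

theorem exists_adj_reachable_deleteEdges (h : ¬ (G.induce S).IsAcyclic) :
    ∃ x ∈ S, ∃ y ∈ S, G.Adj x y ∧ ∀ F : Set (Sym2 α), (∀ e ∈ F, ∃ z ∈ e, z ∉ S) →
      (G.deleteEdges (insert s(x, y) F)).Reachable x y := by
  rw [SimpleGraph.isAcyclic_iff_forall_isBridge] at h
  push Not at h
  obtain ⟨e, he, hbridge⟩ := h
  induction e with
  | h x y =>
    rw [SimpleGraph.isBridge_iff, not_not] at hbridge
    refine ⟨x, x.2, y, y.2, he, fun F hF ↦ hbridge.map ⟨Subtype.val, fun {a b} hab ↦ ?_⟩⟩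
    obtain ⟨hadj, hne⟩ := SimpleGraph.deleteEdges_adj.mp hab
    refine SimpleGraph.deleteEdges_adj.mpr ⟨hadj, ?_⟩
    rintro (h | h)
    · exact hne (Sym2.map.injective Subtype.val_injective (by simpa using h))
    · obtain ⟨z, hz, hzS⟩ := hF _ h
      obtain rfl | rfl := Sym2.mem_iff.mp hz
      exacts [hzS a.2, hzS b.2]

end Cut

namespace SComplex

variable {V : Type} [DecidableEq V] {M M₁ M₂ : SComplex V} {e : Finset V}

namespace SeparationAlong

theorem symm (h : M.SeparationAlong M₁ M₂ e) : M.SeparationAlong M₂ M₁ e :=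
  ⟨by rw [union_comm, h.1], by rw [inter_comm, h.2.1], h.2.2.2, h.2.2.1⟩

theorem triangles_union (h : M.SeparationAlong M₁ M₂ e) :
    M₁.triangles ∪ M₂.triangles = M.triangles := by
  rw [triangles, triangles, triangles, ← filter_union, h.1]

theorem subset_of_mem_of_mem {σ : Finset V} (h : M.SeparationAlong M₁ M₂ e) (h₁ : σ ∈ M₁.faces)
    (h₂ : σ ∈ M₂.faces) : σ ⊆ e :=
  mem_powerset.mp (Finset.mem_filter.mp (h.2.1 ▸ mem_inter.mpr ⟨h₁, h₂⟩)).1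

theorem disjoint_triangles (h : M.SeparationAlong M₁ M₂ e) (he : #e = 2) :
    Disjoint M₁.triangles M₂.triangles := by
  refine disjoint_left.mpr fun T h₁ h₂ ↦ ?_
  obtain ⟨h₁, hT⟩ := mem_triangles.mp h₁
  have := card_le_card (h.subset_of_mem_of_mem h₁ (mem_triangles.mp h₂).1)
  omega

theorem inter_eq {T T' : Finset V} (h : M.SeparationAlong M₁ M₂ e) (he : #e = 2)
    (hT : T ∈ M₁.triangles) (hT' : T' ∉ M₁.triangles) (hadj : M.dualGraph.Adj T T') :
    T ∩ T' = e := by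
  have hT₂ : T' ∈ M₂.triangles :=
    (mem_union.mp (h.triangles_union.symm ▸ hadj.2.1)).resolve_left hT'
  have hne : (T ∩ T').Nonempty := card_pos.mp (hadj.2.2 ▸ two_pos)
  have hsub : T ∩ T' ⊆ e := h.subset_of_mem_of_mem
    (M₁.down_closed T (mem_triangles.mp hT).1 _ inter_subset_left hne)
    (M₂.down_closed T' (mem_triangles.mp hT₂).1 _ inter_subset_right hne)
  exact eq_of_subset_of_card_le hsub (by rw [he, hadj.2.2])

end SeparationAlong

namespace IsSurface

theorem exists_cycle_of_separationAlong [Finite V] (hM : M.IsSurface) (hbd : M.NoInteriorVertices)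
    (he : #e = 2) (h : M.SeparationAlong M₁ M₂ e) (hleaf : ∀ T, ¬ ∃! T', M.dualGraph.Adj T T') :
    ∃ T ∈ M₁.triangles, ∃ T' ∈ M₁.triangles, M.dualGraph.Adj T T' ∧
      ∀ F : Set (Sym2 (Finset V)), (∀ p ∈ F, ∃ S ∈ p, S ∉ M₁.triangles) →
        (M.dualGraph.deleteEdges (insert s(T, T') F)).Reachable T T' := by
  obtain ⟨-, -, ⟨T₁, hT₁, hcard₁⟩, T₂, hT₂, hcard₂⟩ := id h
  replace hT₁ : T₁ ∈ M₁.triangles := mem_triangles.mpr ⟨hT₁, hcard₁⟩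
  replace hT₂ : T₂ ∈ M₂.triangles := mem_triangles.mpr ⟨hT₂, hcard₂⟩
  have mem_left : ∀ {T}, T ∈ M₁.triangles → T ∈ M.triangles := fun hT ↦
    h.triangles_union ▸ mem_union_left _ hT
  have hT₂M : T₂ ∈ M.triangles := h.triangles_union ▸ mem_union_right _ hT₂
  obtain ⟨p⟩ := hM.reachable_dualGraph hbd (mem_left hT₁) hT₂M
  obtain ⟨⟨⟨s, t⟩, hst⟩, -, hs, ht⟩ := p.exists_boundary_dart (M₁.triangles : Set (Finset V)) hT₁
    (disjoint_right.mp (h.disjoint_triangles he) hT₂)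
  have hcross : ∀ x ∈ M₁.triangles, ∀ y ∉ M₁.triangles, M.dualGraph.Adj x y → x = s ∧ y = t := by
    intro x hx y hy hxy
    have hxye := h.inter_eq he hx hy hxy
    have hste := h.inter_eq he hs ht hst
    have hex : e ⊆ x := hxye ▸ inter_subset_left
    have hes : e ⊆ s := hste ▸ inter_subset_left
    have hey : e ⊆ y := hxye ▸ inter_subset_right
    have het : e ⊆ t := hste ▸ inter_subset_right
    have hxs : x = s := hM.eq_of_subset_of_ne he hst.2.1 het hxy.1 hex hst.1 hes
      (ne_of_mem_of_not_mem hx ht).symm hst.ne'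
    exact ⟨hxs, hM.eq_of_subset_of_ne he hst.1 hes hxy.2.1 hey hst.2.1 het
      (ne_of_mem_of_not_mem hs hy) hst.ne⟩
  exact exists_adj_reachable_deleteEdges <| not_isAcyclic_induce hs ht hst hcross
    (fun x hx ↦ hM.reachable_dualGraph hbd (mem_left hx) hst.2.1) hleaf

theorem exists_existsUnique_dualGraph_adj [Fintype V] (hM : M.IsSurface)
    (hbd : M.NoInteriorVertices) (hrank : LogRankLeOne M.realization) (he : #e = 2)
    (h : M.Separates e) : ∃ T, ∃! T', M.dualGraph.Adj T T' := by
  by_contra! hleaf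
  obtain ⟨M₁, M₂, h⟩ := h
  obtain ⟨T₁, hT₁, T₂, -, hadj, hreach⟩ := hM.exists_cycle_of_separationAlong hbd he h hleaf
  obtain ⟨T₁', hT₁', T₂', hT₂', hadj', hreach'⟩ :=
    hM.exists_cycle_of_separationAlong hbd he h.symm hleaf
  have hdisj := disjoint_left.mp (h.disjoint_triangles he)
  have hne : s(T₁, T₂) ≠ s(T₁', T₂') := fun heq ↦ by
    obtain h | h := Sym2.mem_iff.mp (heq ▸ Sym2.mem_mk_left T₁ T₂)
    exacts [hdisj hT₁ (h ▸ hT₁'), hdisj hT₁ (h ▸ hT₂')]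
  refine hM.not_reachable_deleteEdges_pair hbd hrank hadj hadj' hne (hreach _ ?_) ?_
  · simpa using Or.inl fun h ↦ hdisj h hT₁'
  · rw [Set.pair_comm]
    refine hreach' _ ?_
    simpa using Or.inl (hdisj hT₁)

theorem interiorEdge_inter (hM : M.IsSurface) {T T' : Finset V} (h : M.dualGraph.Adj T T') :
    M.InteriorEdge (T ∩ T') := by
  have he : T ∩ T' ∈ M.faces := M.down_closed T (mem_triangles.mp h.1).1 _ inter_subset_left
    (card_pos.mp (h.2.2 ▸ two_pos))
  refine ⟨he, h.2.2, (hM.card_triangles_le_two _ he h.2.2).antisymm ?_⟩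
  exact one_lt_card.mpr ⟨T, Finset.mem_filter.mpr ⟨(mem_triangles.mp h.1).1,
    (mem_triangles.mp h.1).2, inter_subset_left⟩, T', Finset.mem_filter.mpr
    ⟨(mem_triangles.mp h.2.1).1, (mem_triangles.mp h.2.1).2, inter_subset_right⟩, h.ne⟩

theorem exists_dualGraph_adj [Fintype V] (hM : M.IsSurface) (hbd : M.NoInteriorVertices)
    (hlogs : ¬ HasLogs M.realization) : ∃ T T', M.dualGraph.Adj T T' := by
  by_contra! hadj
  refine hlogs ?_
  rw [← iUnion_cell_triangles (hM.pure hbd)]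
  obtain hempty | ⟨T, hT⟩ := M.triangles.eq_empty_or_nonempty
  · intro g hg _
    exact ⟨g, hg, by simp [hempty]⟩
  have heq : ∀ T' ∈ M.triangles, T' = T := fun T' hT' ↦ by
    obtain ⟨p⟩ := hM.reachable_dualGraph hbd hT' hT
    cases p with
    | nil => rfl
    | cons h _ => exact absurd h (hadj _ _)
  have hcell : ⋃ T' : M.triangles, cell T'.1 = cell T := by
    ext f
    simp only [Set.mem_iUnion]
    exact ⟨fun ⟨T', hf⟩ ↦ heq T' T'.2 ▸ hf, fun hf ↦ ⟨⟨T, hT⟩, hf⟩⟩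
  rw [hcell]
  obtain ⟨x, hx⟩ := card_pos.mp ((mem_triangles.mp hT).2 ▸ three_pos)
  exact hasLogs_of_starConvex (single_mem_cell hx) ((convex_cell T).starConvex (single_mem_cell hx))

end IsSurface

end SComplex

namespace SComplex

variable {V : Type} [DecidableEq V] {M : SComplex V} {u v w d x : V} {σ : Finset V}

/-- The triangle `uvw` is an ear: it meets the rest of the complex only along the edge `uv`, on the
other side of which lies the triangle `uvd`. -/
structure IsEar (M : SComplex V) (u v w d : V) : Prop where
  nodup : [u, v, w, d].Nodup
  left_mem : {u, v, w} ∈ M.faces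
  right_mem : {u, v, d} ∈ M.faces
  subset_of_mem : ∀ σ ∈ M.faces, w ∈ σ → σ ⊆ {u, v, w}
  subset_of_pair_mem : ∀ σ ∈ M.faces, u ∈ σ → v ∈ σ → σ ⊆ {u, v, w} ∨ σ ⊆ {u, v, d}

/-- The subcomplex of the faces that avoid the vertex `w`. -/
def deleteVertex (M : SComplex V) (w : V) : SComplex V where
  faces := {σ ∈ M.faces | w ∉ σ}
  nonempty_of_mem σ hσ := M.nonempty_of_mem σ (Finset.mem_filter.mp hσ).1
  down_closed σ hσ τ hτσ hτ :=
    have ⟨hσM, hw⟩ := Finset.mem_filter.mp hσ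
    Finset.mem_filter.mpr ⟨M.down_closed σ hσM τ hτσ hτ, fun h ↦ hw (hτσ h)⟩

theorem mem_faces_deleteVertex : σ ∈ (M.deleteVertex w).faces ↔ σ ∈ M.faces ∧ w ∉ σ :=
  Finset.mem_filter

theorem deleteVertex_faces_subset (M : SComplex V) (w : V) :
    (M.deleteVertex w).faces ⊆ M.faces := Finset.filter_subset _ _

section EarShift

/-- Translation by `s` from the midpoint of `uv` towards `d` and by `t` from `w` towards the
midpoint of `uv`. -/
noncomputable def earShift (u v w d : V) (s t : ℝ) (f : V → ℝ) : V → ℝ :=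
  f + Pi.single u ((t - s) / 2) + Pi.single v ((t - s) / 2) - Pi.single w t + Pi.single d s

/-- The map collapsing the ear `uvw` into the triangle `uvd`: it slides the boundary path `uwv` of
the ear to the edge `uv`, which itself slides into the triangle `uvd`. -/
noncomputable def earPush (u v w d : V) (f : V → ℝ) : V → ℝ :=
  earShift u v w d (min (f u) (f v)) (f w) f

/-- The inverse of `earPush`. -/
noncomputable def earPull (u v w d : V) (f : V → ℝ) : V → ℝ :=
  earShift u v w d (-min (2 * min (f u) (f v)) (f d)) (-max (2 * min (f u) (f v) - f d) 0) f

variable {s t : ℝ} {f : V → ℝ}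

theorem earShift_earShift (s t s' t' : ℝ) (f : V → ℝ) :
    earShift u v w d s t (earShift u v w d s' t' f) = earShift u v w d (s + s') (t + t') f := by
  ext x
  simp only [earShift, Pi.add_apply, Pi.sub_apply, Pi.single_apply]
  split_ifs <;> ring

theorem earShift_zero (f : V → ℝ) : earShift u v w d 0 0 f = f := by
  simp [earShift]

theorem earShift_apply_left (h : [u, v, w, d].Nodup) :
    earShift u v w d s t f u = f u + (t - s) / 2 := by
  simp_all [earShift]

theorem earShift_apply_right (h : [u, v, w, d].Nodup) :
    earShift u v w d s t f v = f v + (t - s) / 2 := by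
  simp_all [earShift, eq_comm]

theorem earShift_apply_apex (h : [u, v, w, d].Nodup) : earShift u v w d s t f w = f w - t := by
  simp_all [earShift, eq_comm]

theorem earShift_apply_opposite (h : [u, v, w, d].Nodup) : earShift u v w d s t f d = f d + s := by
  simp_all [earShift, eq_comm]

theorem earShift_apply_of_notMem (hx : x ∉ ({u, v, w, d} : Finset V)) :
    earShift u v w d s t f x = f x := by
  simp_all [earShift]

theorem continuous_earShift {s t : (V → ℝ) → ℝ} (hs : Continuous s) (ht : Continuous t) :
    Continuous fun f ↦ earShift u v w d (s f) (t f) f := by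
  have hst : Continuous fun f ↦ (t f - s f) / 2 := by fun_prop
  exact (((continuous_id.add ((continuous_single u).comp hst)).add
    ((continuous_single v).comp hst)).sub ((continuous_single w).comp ht)).add
    ((continuous_single d).comp hs)

theorem continuous_earPush : Continuous (earPush u v w d) :=
  continuous_earShift (by fun_prop) (by fun_prop)

theorem continuous_earPull : Continuous (earPull u v w d) :=
  continuous_earShift (by fun_prop) (by fun_prop)

theorem min_earShift (h : [u, v, w, d].Nodup) :
    min (earShift u v w d s t f u) (earShift u v w d s t f v) = min (f u) (f v) + (t - s) / 2 := by
  rw [earShift_apply_left h, earShift_apply_right h, min_add_add_right]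

theorem earPull_earPush (h : [u, v, w, d].Nodup) (hw : 0 ≤ f w) (hd : 0 ≤ f d)
    (hwd : f w = 0 ∨ f d = 0) : earPull u v w d (earPush u v w d f) = f := by
  rw [earPull, earPush, min_earShift h, earShift_apply_opposite h, earShift_earShift]
  set m := min (f u) (f v)
  have hmin : min (2 * (m + (f w - m) / 2)) (f d + m) = m := by
    obtain h | h := hwd <;> rw [h] <;> grind
  have hmax : max (2 * (m + (f w - m) / 2) - (f d + m)) 0 = f w := by
    obtain h | h := hwd <;> rw [h] <;> grind
  rw [hmin, hmax, neg_add_cancel, neg_add_cancel, earShift_zero]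

theorem earPush_earPull (h : [u, v, w, d].Nodup) (hw : f w = 0) :
    earPush u v w d (earPull u v w d f) = f := by
  rw [earPull, earPush, min_earShift h, earShift_apply_apex h, earShift_earShift, hw]
  set m := min (f u) (f v)
  have hmin : m + (-max (2 * m - f d) 0 - -min (2 * m) (f d)) / 2 = min (2 * m) (f d) := by grind
  rw [hmin, zero_sub, neg_neg, add_neg_cancel, add_neg_cancel, earShift_zero]

theorem earPush_of_min_eq_zero (hf : min (f u) (f v) = 0) (hw : f w = 0) :
    earPush u v w d f = f := by
  rw [earPush, hf, hw, earShift_zero]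

theorem earPull_of_min_eq_zero (hf : min (f u) (f v) = 0) (hd : 0 ≤ f d) :
    earPull u v w d f = f := by
  rw [earPull, hf, mul_zero, min_eq_left hd, zero_sub, max_eq_right (neg_nonpos.mpr hd), neg_zero,
    earShift_zero]

variable [Fintype V]

theorem earShift_mem_stdSimplex (h : [u, v, w, d].Nodup) (hf : f ∈ stdSimplex ℝ V)
    (hu : 0 ≤ f u + (t - s) / 2) (hv : 0 ≤ f v + (t - s) / 2) (hw : t ≤ f w) (hd : 0 ≤ f d + s) :
    earShift u v w d s t f ∈ stdSimplex ℝ V := by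
  refine ⟨fun x ↦ ?_, ?_⟩
  · by_cases hx : x ∈ ({u, v, w, d} : Finset V)
    · simp only [Finset.mem_insert, Finset.mem_singleton] at hx
      obtain rfl | rfl | rfl | rfl := hx
      · rwa [earShift_apply_left h]
      · rwa [earShift_apply_right h]
      · rwa [earShift_apply_apex h, sub_nonneg]
      · rwa [earShift_apply_opposite h]
    · rw [earShift_apply_of_notMem hx]
      exact hf.1 x
  · simp only [earShift, Pi.add_apply, Pi.sub_apply, sum_add_distrib, sum_sub_distrib,
      sum_pi_single', mem_univ, if_true, hf.2]
    ring

theorem earShift_mem_cell_right (h : [u, v, w, d].Nodup) (hf : f ∈ cell {u, v, w, d})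
    (hu : 0 ≤ f u + (t - s) / 2) (hv : 0 ≤ f v + (t - s) / 2) (hw : t = f w) (hd : 0 ≤ f d + s) :
    earShift u v w d s t f ∈ cell {u, v, d} := by
  refine ⟨earShift_mem_stdSimplex h hf.1 hu hv hw.le hd, fun x hx ↦ ?_⟩
  obtain rfl | hxw := eq_or_ne x w
  · rw [earShift_apply_apex h, hw, sub_self]
  · have hx : x ∉ ({u, v, w, d} : Finset V) := by simp_all
    rw [earShift_apply_of_notMem hx, hf.2 x hx]

theorem earShift_mem_cell_left (h : [u, v, w, d].Nodup) (hf : f ∈ cell {u, v, w, d})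
    (hu : 0 ≤ f u + (t - s) / 2) (hv : 0 ≤ f v + (t - s) / 2) (hw : t ≤ f w) (hd : f d + s = 0) :
    earShift u v w d s t f ∈ cell {u, v, w} := by
  refine ⟨earShift_mem_stdSimplex h hf.1 hu hv hw hd.ge, fun x hx ↦ ?_⟩
  obtain rfl | hxd := eq_or_ne x d
  · rw [earShift_apply_opposite h, hd]
  · have hx : x ∉ ({u, v, w, d} : Finset V) := by simp_all
    rw [earShift_apply_of_notMem hx, hf.2 x hx]

theorem earPush_mem_cell (h : [u, v, w, d].Nodup) (hf : f ∈ cell {u, v, w, d}) :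
    earPush u v w d f ∈ cell {u, v, d} := by
  have h₀ := hf.1.1
  exact earShift_mem_cell_right h hf (by grind) (by grind) rfl (by grind)

theorem earPull_mem_cell (h : [u, v, w, d].Nodup) (hf : f ∈ cell {u, v, d}) :
    earPull u v w d f ∈ cell {u, v, w} ∨ earPull u v w d f ∈ cell {u, v, d} := by
  have h₀ := hf.1.1
  have hf' : f ∈ cell {u, v, w, d} := cell_mono (by grind) hf
  have hw : f w = 0 := hf.2 w (by simp_all [eq_comm])
  obtain hd | hd := le_total (f d) (2 * min (f u) (f v))
  · exact .inl (earShift_mem_cell_left h hf' (by grind) (by grind) (by grind) (by grind))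
  · exact .inr (earShift_mem_cell_right h hf' (by grind) (by grind) (by grind) (by grind))

end EarShift

namespace IsEar

variable [Fintype V] {f : V → ℝ}

theorem mem_cell_or (h : M.IsEar u v w d) (hf : f ∈ M.realization) :
    f ∈ cell {u, v, w} ∨ f ∈ cell {u, v, d} ∨
      f ∈ (M.deleteVertex w).realization ∧ min (f u) (f v) = 0 := by
  obtain ⟨σ, hσ, hfσ⟩ := mem_realization_iff.mp hf
  by_cases hw : w ∈ σ
  · exact .inl (cell_mono (h.subset_of_mem σ hσ hw) hfσ)
  by_cases huv : u ∈ σ ∧ v ∈ σ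
  · exact (h.subset_of_pair_mem σ hσ huv.1 huv.2).imp (cell_mono · hfσ) (.inl <| cell_mono · hfσ)
  · refine .inr (.inr ⟨cell_subset_realization (mem_faces_deleteVertex.mpr ⟨hσ, hw⟩) hfσ, ?_⟩)
    obtain hu | hv := not_and_or.mp huv
    · rw [hfσ.2 u hu, min_eq_left (hfσ.1.1 v)]
    · rw [hfσ.2 v hv, min_eq_right (hfσ.1.1 u)]

theorem apply_eq_zero (hf : f ∈ (M.deleteVertex w).realization) : f w = 0 := by
  obtain ⟨σ, hσ, hfσ⟩ := mem_realization_iff.mp hf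
  exact hfσ.2 w (mem_faces_deleteVertex.mp hσ).2

theorem mapsTo_earPush (h : M.IsEar u v w d) :
    Set.MapsTo (earPush u v w d) M.realization (M.deleteVertex w).realization := by
  have hdel : {u, v, d} ∈ (M.deleteVertex w).faces :=
    mem_faces_deleteVertex.mpr ⟨h.right_mem, by have := h.nodup; simp_all [eq_comm]⟩
  intro f hf
  obtain hf | hf | ⟨hf, hmin⟩ := h.mem_cell_or hf
  · exact cell_subset_realization hdel (earPush_mem_cell h.nodup (cell_mono (by grind) hf))
  · exact cell_subset_realization hdel (earPush_mem_cell h.nodup (cell_mono (by grind) hf))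
  · rwa [earPush_of_min_eq_zero hmin (apply_eq_zero hf)]

theorem mapsTo_earPull (h : M.IsEar u v w d) :
    Set.MapsTo (earPull u v w d) (M.deleteVertex w).realization M.realization := by
  have hcell : ∀ f ∈ cell {u, v, d}, earPull u v w d f ∈ M.realization := fun f hf ↦
    (earPull_mem_cell h.nodup hf).elim (cell_subset_realization h.left_mem ·)
      (cell_subset_realization h.right_mem ·)
  intro f hf
  have hfM := realization_mono (M.deleteVertex_faces_subset w) hf
  obtain hf' | hf' | ⟨-, hmin⟩ := h.mem_cell_or hfM
  · refine hcell f ⟨hf'.1, fun x hx ↦ ?_⟩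
    obtain rfl | hxw := eq_or_ne x w
    · exact apply_eq_zero hf
    · exact hf'.2 x (by simp_all)
  · exact hcell f hf'
  · rwa [earPull_of_min_eq_zero hmin ((realization_subset_stdSimplex hf).1 d)]

theorem apply_apex_eq_zero_or (h : M.IsEar u v w d) (hf : f ∈ M.realization) :
    f w = 0 ∨ f d = 0 := by
  have := h.nodup
  obtain hf | hf | ⟨hf, -⟩ := h.mem_cell_or hf
  · exact .inr (hf.2 d (by simp_all [eq_comm]))
  · exact .inl (hf.2 w (by simp_all [eq_comm]))
  · exact .inl (apply_eq_zero hf)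

theorem nonempty_homeomorph (h : M.IsEar u v w d) :
    Nonempty (M.realization ≃ₜ (M.deleteVertex w).realization) :=
  ⟨{  toFun := h.mapsTo_earPush.restrict
      invFun := h.mapsTo_earPull.restrict
      left_inv := fun f ↦ Subtype.ext <|
        have hf := (realization_subset_stdSimplex f.2).1
        earPull_earPush h.nodup (hf w) (hf d) (h.apply_apex_eq_zero_or f.2)
      right_inv := fun f ↦ Subtype.ext <| earPush_earPull h.nodup (apply_eq_zero f.2)
      continuous_toFun := continuous_earPush.restrict h.mapsTo_earPush
      continuous_invFun := continuous_earPull.restrict h.mapsTo_earPull }⟩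

end IsEar

section DeleteEar

theorem IsEar.card_deleteVertex_lt (h : M.IsEar u v w d) :
    #(M.deleteVertex w).faces < #M.faces :=
  card_lt_card <| filter_ssubset.mpr ⟨_, h.left_mem, by simp⟩

theorem IsEar.noInteriorVertices_deleteVertex (h : M.IsEar u v w d) (hbd : M.NoInteriorVertices) :
    (M.deleteVertex w).NoInteriorVertices := by
  intro x hx
  obtain ⟨hxM, hxw⟩ := mem_faces_deleteVertex.mp (mem_vertices.mp hx)
  rw [Finset.mem_singleton, eq_comm] at hxw
  by_cases hxuv : x ∈ ({u, v} : Finset V)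
  · obtain ⟨hwu, hwv, hwd, huv⟩ : w ≠ u ∧ w ≠ v ∧ w ≠ d ∧ u ≠ v := by grind [h.nodup]
    have huvM : {u, v} ∈ M.faces := M.down_closed _ h.left_mem _ (by grind) (insert_nonempty _ _)
    refine ⟨{u, v}, mem_faces_deleteVertex.mpr ⟨huvM, by grind⟩, hxuv, card_pair huv,
      card_eq_one.mpr ⟨{u, v, d}, ?_⟩⟩
    ext τ
    rw [Finset.mem_filter, mem_faces_deleteVertex, Finset.mem_singleton]
    refine ⟨fun ⟨⟨hτ, hwτ⟩, hτcard, huvτ⟩ ↦ ?_, ?_⟩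
    · obtain hsub | hsub := h.subset_of_pair_mem τ hτ (huvτ (by simp)) (huvτ (by simp))
      · have heq := eq_of_subset_of_card_le hsub (hτcard ▸ Finset.card_le_three)
        exact absurd (by simp [heq]) hwτ
      · exact eq_of_subset_of_card_le hsub (hτcard ▸ Finset.card_le_three)
    · rintro rfl
      exact ⟨⟨h.right_mem, by grind⟩, by grind [h.nodup], by grind⟩
  · obtain ⟨e, he, hxe, hecard, hbde⟩ := hbd x (mem_vertices.mpr hxM)
    have hwe : ∀ σ ∈ M.faces, e ⊆ σ → w ∉ σ := fun σ hσ heσ hwσ ↦ by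
      have := h.subset_of_mem σ hσ hwσ (heσ hxe)
      simp_all
    refine ⟨e, mem_faces_deleteVertex.mpr ⟨he, hwe e he subset_rfl⟩, hxe, hecard, ?_⟩
    rw [← hbde]
    congr 1
    ext τ
    simp only [Finset.mem_filter, mem_faces_deleteVertex]
    grind

theorem IsSurface.subset_of_forall_notMem_of_dualGraph_adj (hM : M.IsSurface)
    (hbd : M.NoInteriorVertices) {T : Finset V} (hT : T ∈ M.triangles) (hw : w ∈ T)
    (hadj : ∀ T', M.dualGraph.Adj T T' → w ∉ T') (hσ : σ ∈ M.faces) (hwσ : w ∈ σ) : σ ⊆ T := by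
  obtain ⟨A, hA, hσA, hAcard⟩ := hM.pure hbd σ hσ
  obtain ⟨p⟩ := hM.reachable_starGraph hT (mem_triangles.mpr ⟨hA, hAcard⟩) hw (hσA hwσ)
  cases p with
  | nil => exact hσA
  | cons hTB _ => exact absurd (mem_of_mem_inter_right hTB.2) (hadj _ hTB.1)

theorem IsSurface.exists_isEar (hM : M.IsSurface) (hbd : M.NoInteriorVertices)
    {T : Finset V} (hleaf : ∃! T', M.dualGraph.Adj T T') : ∃ u v w d, M.IsEar u v w d := by
  obtain ⟨T', hadj, huniq⟩ := hleaf
  obtain ⟨hT, hT', hcard⟩ := hadj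
  obtain ⟨u, v, huv, hTT'⟩ := card_eq_two.mp hcard
  obtain ⟨w, hw, hwT⟩ := exists_eq_insert_iff.mpr
    ⟨inter_subset_left (s₁ := T) (s₂ := T'), by rw [hcard, (mem_triangles.mp hT).2]⟩
  obtain ⟨d, hd, hdT'⟩ := exists_eq_insert_iff.mpr
    ⟨inter_subset_right (s₁ := T) (s₂ := T'), by rw [hcard, (mem_triangles.mp hT').2]⟩
  rw [hTT'] at hw hwT hd hdT'
  obtain rfl : T = {u, v, w} := by rw [← hwT, insert_comm, pair_comm]
  obtain rfl : T' = {u, v, d} := by rw [← hdT', insert_comm, pair_comm]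
  refine ⟨u, v, w, d, by grind, (mem_triangles.mp hT).1, (mem_triangles.mp hT').1,
    fun σ hσ hwσ ↦ ?_, fun σ hσ huσ hvσ ↦ ?_⟩
  · refine hM.subset_of_forall_notMem_of_dualGraph_adj hbd hT (by simp) (fun A hA ↦ ?_) hσ hwσ
    rw [huniq A hA]
    grind
  · obtain ⟨A, hA, hσA, hAcard⟩ := hM.pure hbd σ hσ
    refine or_iff_not_imp_left.mpr fun hσT ↦ ?_
    have hTA : {u, v, w} ≠ A := fun h ↦ hσT (h ▸ hσA)
    rwa [hM.eq_of_subset_of_ne (card_pair huv) hT (by grind) hT' (by grind)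
      (mem_triangles.mpr ⟨hA, hAcard⟩) (insert_subset (hσA huσ) (by simpa using hσA hvσ))
      (by grind) hTA]

end DeleteEar

end SComplex

namespace SComplex

variable {V : Type} [DecidableEq V] [Fintype V]

theorem exists_isEar_of_separates {M : SComplex V} (hM : IsBandLike M.realization)
    (hbd : M.NoInteriorVertices) {e : Finset V} (he : #e = 2) (h : M.Separates e) :
    ∃ u v w d, M.IsEar u v w d :=
  have hsurf := isSurface_of_isBandLike hM
  have ⟨_, hleaf⟩ := hsurf.exists_existsUnique_dualGraph_adj hbd hM.logRankLeOne he h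
  hsurf.exists_isEar hbd hleaf

end SComplex

theorem mobius_has_nonseparating_core_general {V : Type} [DecidableEq V] [Fintype V]
    (M : SComplex V) (hM : IsBandLike M.realization) (hbd : M.NoInteriorVertices) :
    (∃ e, M.InteriorEdge e) ∧
    ∃ M' : SComplex V, M'.faces ⊆ M.faces ∧ Nonempty (M'.realization ≃ₜ M.realization) ∧
      M'.NoInteriorVertices ∧ ∀ e, M'.InteriorEdge e → ¬ M'.Separates e := by
  constructor
  · have hsurf := SComplex.isSurface_of_isBandLike hM
    obtain ⟨T, T', hadj⟩ := hsurf.exists_dualGraph_adj hbd hM.not_hasLogs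
    exact ⟨T ∩ T', hsurf.interiorEdge_inter hadj⟩
  induction hn : #M.faces using Nat.strong_induction_on generalizing M with
  | _ n ih =>
    subst hn
    by_cases hsep : ∃ e, M.InteriorEdge e ∧ M.Separates e
    · obtain ⟨e, he, hsep⟩ := hsep
      obtain ⟨u, v, w, d, hear⟩ := SComplex.exists_isEar_of_separates hM hbd he.2.1 hsep
      obtain ⟨φ⟩ := hear.nonempty_homeomorph
      obtain ⟨M', hsub, ⟨ψ⟩, hM'⟩ := ih _ hear.card_deleteVertex_lt _ (hM.of_homeomorph φ)
        (hear.noInteriorVertices_deleteVertex hbd) rfl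
      exact ⟨M', hsub.trans (M.deleteVertex_faces_subset w), ⟨ψ.trans φ.symm⟩, hM'⟩
    · push Not at hsep
      exact ⟨M, subset_rfl, ⟨.refl _⟩, hbd, hsep⟩

/-- a triangulated Möbius strip `M` with no interior vertices has an
interior edge, and (by repeatedly cutting along separating interior edges) contains
a subcomplex `M'` which is a Möbius strip without interior vertices, all of whose
interior edges are non-separating. -/
theorem mobius_has_nonseparating_core {V : Type} [DecidableEq V] [Fintype V]
    (M : SComplex V) (hM : M.IsMobius) (hniv : M.NoInteriorVertices) :
    (∃ e, M.InteriorEdge e) ∧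
    ∃ M' : SComplex V, M'.faces ⊆ M.faces ∧ M'.IsMobius ∧ M'.NoInteriorVertices ∧
      ∀ e, M'.InteriorEdge e → ¬ M'.Separates e := by
  obtain ⟨φ⟩ := hM
  obtain ⟨hint, M', hsub, ⟨ψ⟩, hM'⟩ := mobius_has_nonseparating_core_general M
    (MobiusBand.isBandLike.of_homeomorph φ.symm) hniv
  exact ⟨hint, M', hsub, ⟨ψ.trans φ⟩, hM'⟩
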